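/- Let q be a prime power with q ≥ 5 and let P be a closed point of degree 3 of P² over F_q not contained in any F_q-rational line, given by a point p ∈ P²(F_{q³}) whose Frobenius orbit {p, φ(p), φ²(p)} has exactly 3 elements, these three points being non-collinear. Let V be the F_q-vector space of homogeneous polynomials of degree 5 in F_q[x,y,z] vanishing at p. Then the evaluation code C_L(Z, L_5), obtained by evaluating the elements of V at the q² + q + 1 points of P²(F_q), has parameters [q² + q + 1, 18, q² − 3q − 1]: its length is q² + q + 1, its dimension is 18 (in particular dim V = 18 and the evaluation map is injective), and its minimum distance is exactly q² − 3q − 1. -/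

import Mathlib

open MvPolynomial

noncomputable section

set_option linter.all false



open Classical in
/-- Finite projective plane axioms of order `q`, in counting form. -/
structure PlaneAx (q : ℕ) (P L : Type) [Fintype P] [Fintype L] (I : P → L → Prop) : Prop where
  lines_through : ∀ p : P, (Finset.univ.filter (fun l => I p l)).card = q + 1
  points_on : ∀ l : L, (Finset.univ.filter (fun p => I p l)).card = q + 1
  join : ∀ p p' : P, p ≠ p' → (Finset.univ.filter (fun l => I p l ∧ I p' l)).card = 1
  meet : ∀ l l' : L, l ≠ l' → (Finset.univ.filter (fun p => I p l ∧ I p l')).card = 1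

namespace PlaneAx

variable {q : ℕ} {P L : Type} [Fintype P] [Fintype L] {I : P → L → Prop}

open Classical in
/-- number of points of `K` on `l`. -/
def kk (I : P → L → Prop) (K : Finset P) (l : L) : ℕ := (K.filter (fun p => I p l)).card

open Classical in
/-- number of points of `K` whose chosen tangent is `l`. -/
def tt (T : P → L) (K : Finset P) (l : L) : ℕ := (K.filter (fun p => T p = l)).card

open Classical in
theorem sum_through (h : PlaneAx q P L I) (K : Finset P) (R : P) :
    ∑ l ∈ Finset.univ.filter (fun l => I R l), kk I K l = K.card + if R ∈ K then q else 0 := by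
  have h1 : ∀ l, kk I K l = ∑ p ∈ K, if I p l then 1 else 0 := by
    intro l; unfold kk; rw [Finset.card_filter]
  simp_rw [h1]
  rw [Finset.sum_comm]
  have h2 : ∀ p ∈ K, (∑ l ∈ Finset.univ.filter (fun l => I R l), if I p l then 1 else 0)
      = 1 + if p = R then q else 0 := by
    intro p _
    rw [← Finset.card_filter, Finset.filter_filter]
    by_cases hp : p = R
    · subst hp
      have := h.lines_through p
      simp only [and_self, if_true]; omega
    · simp only [hp, if_false]
      have := h.join R p (fun e => hp e.symm)
      omega
  rw [Finset.sum_congr rfl h2, Finset.sum_add_distrib]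
  simp

open Classical in
theorem sum_def (h : PlaneAx q P L I) (K : Finset P) (d : ℕ) (hd : ∀ l, kk I K l ≤ d) (R : P) :
    ∑ l ∈ Finset.univ.filter (fun l => I R l), (d - kk I K l) +
      (K.card + if R ∈ K then q else 0) = d * (q + 1) := by
  rw [← h.sum_through K R, ← Finset.sum_add_distrib]
  rw [Finset.sum_congr rfl (g := fun _ => d) (fun l _ => Nat.sub_add_cancel (hd l))]
  rw [Finset.sum_const, h.lines_through]; simp [mul_comm]

/-- Hypotheses on a point set with tangents. -/
structure TanSet (I : P → L → Prop) (K : Finset P) (T : P → L) (d : ℕ) : Prop where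
  mem : ∀ p ∈ K, I p (T p)
  bound : ∀ l, kk I K l + tt T K l ≤ d

open Classical in
theorem tt_pos {K : Finset P} {T : P → L} {p : P} (hp : p ∈ K) : 1 ≤ tt T K (T p) :=
  Finset.card_pos.mpr ⟨p, by simp [hp]⟩

open Classical in
theorem sum_tt (K : Finset P) (T : P → L) : ∑ l, tt T K l = K.card := by
  unfold tt
  rw [Finset.card_eq_sum_card_fiberwise (f := T) (t := Finset.univ) (by simp)]

open Classical in
theorem sum_kk_def (K : Finset P) (I : P → L → Prop) (g : L → ℕ) :
    ∑ l, kk I K l * g l = ∑ p ∈ K, ∑ l ∈ Finset.univ.filter (fun l => I p l), g l := by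
  have : ∀ p ∈ K, ∑ l ∈ Finset.univ.filter (fun l => I p l), g l =
      ∑ l, if I p l then g l else 0 := by
    intro p _; rw [Finset.sum_filter]
  rw [Finset.sum_congr rfl this, Finset.sum_comm]
  refine Finset.sum_congr rfl fun l _ => ?_
  unfold kk
  rw [← Finset.sum_filter, Finset.sum_const, smul_eq_mul]

theorem boundA (h : PlaneAx q P L I) {K : Finset P} {T : P → L} {d : ℕ} (hT : TanSet I K T d)
    (hK : K.Nonempty) : K.card + q + 1 ≤ d * (q + 1) := by
  classical
  obtain ⟨p, hp⟩ := hK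
  have h1 := h.sum_def K d (fun l => by have := hT.bound l; omega) p
  rw [if_pos hp] at h1
  have h2 : d - kk I K (T p) ≤ ∑ l ∈ Finset.univ.filter (fun l => I p l), (d - kk I K l) :=
    Finset.single_le_sum (f := fun l => d - kk I K l) (fun _ _ => Nat.zero_le _)
      (by simp [hT.mem p hp])
  have h3 := hT.bound (T p)
  have h4 := tt_pos (T := T) hp
  omega

/-- if a line through `p` has all the deficiency minus 0, `T p` is that line. -/
theorem two_le (h : PlaneAx q P L I) {K : Finset P} {T : P → L} {d : ℕ} (hT : TanSet I K T d)
    {p : P} (hp : p ∈ K) {l : L} (hl : I p l) (hne : T p ≠ l) :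
    (d - kk I K (T p)) + (d - kk I K l) + (K.card + q) ≤ d * (q + 1) := by
  classical
  have h1 := h.sum_def K d (fun l => by have := hT.bound l; omega) p
  rw [if_pos hp] at h1
  have h2 : ∑ l ∈ ({T p, l} : Finset L), (d - kk I K l) ≤
      ∑ l ∈ Finset.univ.filter (fun l => I p l), (d - kk I K l) := by
    apply Finset.sum_le_sum_of_subset
    intro x hx
    simp only [Finset.mem_insert, Finset.mem_singleton] at hx
    rcases hx with rfl | rfl
    · simp [hT.mem p hp]
    · simp [hl]
  rw [Finset.sum_pair hne] at h2
  omega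

theorem kk_le_tt {K : Finset P} {T : P → L} {l : L} (hall : ∀ p ∈ K, I p l → T p = l) :
    kk I K l ≤ tt T K l := by
  classical
  apply Finset.card_le_card
  intro p hp
  simp only [Finset.mem_filter] at hp ⊢
  exact ⟨hp.1, hall p hp.1 hp.2⟩

theorem boundB (h : PlaneAx q P L I) {K : Finset P} {T : P → L} {d : ℕ} (hT : TanSet I K T d)
    (hK : K.Nonempty) (hd : 3 ≤ d) : K.card + q + 2 ≤ d * (q + 1) := by
  classical
  by_contra hlt
  have hA := h.boundA hT hK
  have heq : K.card + q + 1 = d * (q + 1) := by omega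
  obtain ⟨p, hp⟩ := hK
  have h1 := h.sum_def K d (fun l => by have := hT.bound l; omega) p
  rw [if_pos hp] at h1
  have h2 : d - kk I K (T p) ≤ ∑ l ∈ Finset.univ.filter (fun l => I p l), (d - kk I K l) :=
    Finset.single_le_sum (f := fun l => d - kk I K l) (fun _ _ => Nat.zero_le _)
      (by simp [hT.mem p hp])
  have h3 := hT.bound (T p)
  have h4 := tt_pos (T := T) hp
  have h5 : kk I K (T p) ≤ tt T K (T p) := by
    apply kk_le_tt
    intro p' hp' hI
    by_contra hne
    have h6 := h.two_le hT hp' hI hne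
    have h7 := hT.bound (T p')
    have h8 := tt_pos (T := T) hp'
    omega
  omega

theorem perline (h : PlaneAx q P L I) {K : Finset P} {T : P → L} {d : ℕ} (hT : TanSet I K T d)
    (hd : 4 ≤ d) (heq : K.card + q + 2 = d * (q + 1)) (l : L) :
    2 * tt T K l ≤ kk I K l * (d - kk I K l) ∧
    (1 ≤ tt T K l → (d = 4 ∧ kk I K l = 2) ∨ 2 * tt T K l < kk I K l * (d - kk I K l)) := by
  classical
  by_cases h0 : tt T K l = 0
  · rw [h0]; exact ⟨by simp, by omega⟩
  obtain ⟨p, hp⟩ := Finset.card_pos.mp (Nat.pos_of_ne_zero h0)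
  simp only [Finset.mem_filter] at hp
  obtain ⟨hp, rfl⟩ := hp
  have h1 := h.sum_def K d (fun l => by have := hT.bound l; omega) p
  rw [if_pos hp] at h1
  have h2 : d - kk I K (T p) ≤ ∑ l ∈ Finset.univ.filter (fun l => I p l), (d - kk I K l) :=
    Finset.single_le_sum (f := fun l => d - kk I K l) (fun _ _ => Nat.zero_le _)
      (by simp [hT.mem p hp])
  have h3 := hT.bound (T p)
  have h4 := tt_pos (T := T) hp
  have hcases : kk I K (T p) = d - 1 ∨ kk I K (T p) = d - 2 := by omega
  rcases hcases with hc | hc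
  · have h9 : d - kk I K (T p) = 1 := by omega
    rw [h9]
    omega
  · have h5 : kk I K (T p) ≤ tt T K (T p) := by
      apply kk_le_tt
      intro p' hp' hI
      by_contra hne
      have h6 := h.two_le hT hp' hI hne
      have h7 := hT.bound (T p')
      have h8 := tt_pos (T := T) hp'
      omega
    have h9 : d - kk I K (T p) = 2 := by omega
    rw [h9]
    omega

theorem sumline (h : PlaneAx q P L I) {K : Finset P} {T : P → L} {d : ℕ} (hT : TanSet I K T d)
    (heq : K.card + q + 2 = d * (q + 1)) :
    ∑ l, kk I K l * (d - kk I K l) = ∑ l, 2 * tt T K l := by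
  classical
  rw [← Finset.mul_sum, sum_tt, sum_kk_def]
  rw [Finset.sum_congr rfl (g := fun _ => 2), Finset.sum_const, smul_eq_mul, mul_comm]
  intro p hp
  have h1 := h.sum_def K d (fun l => by have := hT.bound l; omega) p
  rw [if_pos hp] at h1
  omega

theorem boundC (h : PlaneAx q P L I) {K : Finset P} {T : P → L} {d : ℕ} (hT : TanSet I K T d)
    (hK : K.Nonempty) (hd : 4 ≤ d) (heq : K.card + q + 2 = d * (q + 1)) :
    d = 4 ∧ ∀ l, 2 * tt T K l = kk I K l * (4 - kk I K l) := by
  classical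
  have h1 := h.sumline hT heq
  have h2 : ∀ l ∈ Finset.univ, 2 * tt T K l = kk I K l * (d - kk I K l) := by
    rw [← Finset.sum_eq_sum_iff_of_le (fun l _ => (h.perline hT hd heq l).1)]
    exact h1.symm
  obtain ⟨p, hp⟩ := hK
  have hd4 : d = 4 := by
    have h3 := (h.perline hT hd heq (T p)).2 (tt_pos hp)
    have h4 := h2 (T p) (Finset.mem_univ _)
    omega
  subst hd4
  exact ⟨rfl, fun l => h2 l (Finset.mem_univ _)⟩

theorem five_bound (h : PlaneAx q P L I) {K : Finset P} {T : P → L} (hT : TanSet I K T 5) :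
    K.card ≤ 4 * q + 2 := by
  rcases K.eq_empty_or_nonempty with rfl | hK
  · simp
  have h1 := h.boundB hT hK (by norm_num)
  by_contra hlt
  have := (h.boundC hT hK (by norm_num) (by omega)).1
  omega

theorem three_bound (h : PlaneAx q P L I) {K : Finset P} {T : P → L} (hT : TanSet I K T 3) :
    K.card ≤ 2 * q + 1 := by
  rcases K.eq_empty_or_nonempty with rfl | hK
  · simp
  have h1 := h.boundB hT hK (by norm_num)
  omega

theorem two_bound (h : PlaneAx q P L I) {K : Finset P} {T : P → L} (hT : TanSet I K T 2) :
    K.card ≤ q + 1 := by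
  rcases K.eq_empty_or_nonempty with rfl | hK
  · simp
  have h1 := h.boundA hT hK
  omega

open Classical in
/-- Structure of the extremal quartic case. -/
theorem four_struct (h : PlaneAx q P L I) {K : Finset P} {T : P → L} (hT : TanSet I K T 4)
    (hc : 3 * q + 1 < K.card) :
    K.card = 3 * q + 2 ∧ ∃ B : Finset L, 2 * B.card = 3 * q + 2 ∧
      (∀ l ∈ B, ∃ p ∈ K, ∃ p' ∈ K, p ≠ p' ∧ T p = l ∧ T p' = l) ∧
      (∀ l ∈ B, ∀ l' ∈ B, l ≠ l' → ∀ R, I R l → I R l' →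
        2 * (B.filter (fun m => I R m)).card ≤ q + 2) := by
  have hK : K.Nonempty := Finset.card_pos.mp (by omega)
  have h1 := h.boundB hT hK (by norm_num)
  have hcard : K.card = 3 * q + 2 := by omega
  have h2 := (h.boundC hT hK (le_refl 4) (by omega)).2
  have hk4 : ∀ l, kk I K l ≤ 4 := fun l => by have := hT.bound l; omega
  have hk : ∀ l, (kk I K l = 2 ∧ tt T K l = 2) ∨ tt T K l = 0 := by
    intro l
    have h3 := h2 l
    have h4 := hk4 l
    interval_cases hh : kk I K l <;> omega
  refine ⟨hcard, Finset.univ.filter (fun l => tt T K l = 2), ?_, ?_, ?_⟩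
  · rw [← hcard, ← sum_tt K T, mul_comm, ← smul_eq_mul, ← Finset.sum_const, Finset.sum_filter]
    refine Finset.sum_congr rfl fun l _ => ?_
    rcases hk l with ⟨_, h4⟩ | h4 <;> simp [h4]
  · intro l hl
    simp only [Finset.mem_filter, Finset.mem_univ, true_and] at hl
    obtain ⟨p, p', hne, he⟩ := Finset.card_eq_two.mp hl
    have hp : p ∈ K.filter (fun p => T p = l) := by rw [he]; simp
    have hp' : p' ∈ K.filter (fun p => T p = l) := by rw [he]; simp
    simp only [Finset.mem_filter] at hp hp'
    exact ⟨p, hp.1, p', hp'.1, hne, hp.2, hp'.2⟩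
  · intro l hl l' hl' hne R hRl hRl'
    simp only [Finset.mem_filter, Finset.mem_univ, true_and] at hl hl'
    have key : ∀ m, tt T K m = 2 → ∀ p ∈ K, I p m → T p = m := by
      intro m hm p hp hI
      have h5 : K.filter (fun p => T p = m) = K.filter (fun p => I p m) := by
        apply Finset.eq_of_subset_of_card_le
        · intro x hx
          simp only [Finset.mem_filter] at hx ⊢
          exact ⟨hx.1, hx.2 ▸ hT.mem x hx.1⟩
        · rcases hk m with ⟨h6, h7⟩ | h6
          · unfold kk at h6; unfold tt at h7; omega
          · omega
      have : p ∈ K.filter (fun p => I p m) := by simp [hp, hI]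
      rw [← h5] at this
      exact (Finset.mem_filter.mp this).2
    have hR : R ∉ K := fun hR => hne ((key l hl R hR hRl).symm.trans (key l' hl' R hR hRl'))
    have h5 := h.sum_def K 4 hk4 R
    rw [if_neg hR] at h5
    have h6 : ∑ m ∈ (Finset.univ.filter (fun l => tt T K l = 2)).filter (fun m => I R m), 2 ≤
        ∑ l ∈ Finset.univ.filter (fun l => I R l), (4 - kk I K l) := by
      calc _ ≤ ∑ m ∈ (Finset.univ.filter (fun l => tt T K l = 2)).filter (fun m => I R m),
            (4 - kk I K m) := by
            apply Finset.sum_le_sum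
            intro m hm
            simp only [Finset.mem_filter, Finset.mem_univ, true_and] at hm
            rcases hk m with ⟨h8, _⟩ | h8 <;> omega
        _ ≤ _ := by
            apply Finset.sum_le_sum_of_subset
            intro m hm
            simp only [Finset.mem_filter, Finset.mem_univ, true_and] at hm ⊢
            exact hm.2
    rw [Finset.sum_const, smul_eq_mul] at h6
    omega

open Classical in
/-- Existence of a point with three external lines off a conic-like set. -/
theorem exists_three (h : PlaneAx q P L I) (hq : 5 ≤ q) (hP : Fintype.card P = q ^ 2 + q + 1)
    (hL : Fintype.card L = q ^ 2 + q + 1) {K : Finset P} (hK : K.card = q + 1)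
    (h2 : ∀ l, kk I K l ≤ 2) :
    ∃ R : P, ∃ l₁ l₂ l₃ : L, l₁ ≠ l₂ ∧ l₁ ≠ l₃ ∧ l₂ ≠ l₃ ∧ I R l₁ ∧ I R l₂ ∧ I R l₃ ∧
      kk I K l₁ = 0 ∧ kk I K l₂ = 0 ∧ kk I K l₃ = 0 := by
  have hs1 : ∑ l, kk I K l * 1 = (q + 1) * (q + 1) := by
    rw [sum_kk_def, Finset.sum_congr rfl (g := fun _ => q + 1)]
    · rw [Finset.sum_const, hK, smul_eq_mul]
    · intro p _; rw [Finset.sum_const, h.lines_through]; simp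
  have hs2 : ∑ l, kk I K l * kk I K l = (q + 1) * (q + 1 + q) := by
    rw [sum_kk_def, Finset.sum_congr rfl (g := fun _ => q + 1 + q)]
    · rw [Finset.sum_const, hK, smul_eq_mul]
    · intro p hp; rw [h.sum_through, if_pos hp, hK]
  set Z : Finset L := Finset.univ.filter (fun l => kk I K l = 0) with hZ
  -- 2 * [k = 0] + 3k = k^2 + 2 pointwise
  have hs3 : 2 * Z.card + 3 * ∑ l, kk I K l * 1 =
      ∑ l, kk I K l * kk I K l + 2 * Fintype.card L := by
    rw [hZ, Finset.card_filter, Finset.mul_sum, Finset.mul_sum, ← Finset.sum_add_distrib,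
      ← Finset.card_univ, Finset.card_eq_sum_ones, Finset.mul_sum, ← Finset.sum_add_distrib]
    refine Finset.sum_congr rfl fun l _ => ?_
    have := h2 l
    interval_cases hh : kk I K l <;> simp
  rw [hs1, hs2, hL] at hs3
  by_contra hcon
  have hR : ∀ R : P, (Z.filter (fun l => I R l)).card ≤ if R ∈ K then 0 else 2 := by
    intro R
    split_ifs with hRK
    · rw [Nat.le_zero, Finset.card_eq_zero, Finset.filter_eq_empty_iff]
      intro l hl hI
      simp only [hZ, Finset.mem_filter, Finset.mem_univ, true_and, kk, Finset.card_eq_zero,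
        Finset.filter_eq_empty_iff] at hl
      exact hl hRK hI
    · by_contra hlt
      obtain ⟨a, ha, b, hb, c, hc, hab, hac, hbc⟩ := Finset.two_lt_card.mp (not_le.mp hlt)
      simp only [hZ, Finset.mem_filter, Finset.mem_univ, true_and] at ha hb hc
      exact hcon ⟨R, a, b, c, hab, hac, hbc, ha.2, hb.2, hc.2, ha.1, hb.1, hc.1⟩
  have hs4 : ∑ R : P, (Z.filter (fun l => I R l)).card = Z.card * (q + 1) := by
    simp_rw [Finset.card_filter]
    rw [Finset.sum_comm, Finset.sum_congr rfl (g := fun _ => q + 1)]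
    · rw [Finset.sum_const, smul_eq_mul]
    · intro l _; rw [← Finset.card_filter, h.points_on]
  have hs5 : Z.card * (q + 1) ≤ 2 * q ^ 2 := by
    rw [← hs4]
    refine (Finset.sum_le_sum (fun R _ => hR R)).trans ?_
    have h9 : ∑ R : P, (if R ∈ K then 0 else 2) + ∑ R : P, (if R ∈ K then 2 else 0)
        = 2 * Fintype.card P := by
      rw [← Finset.sum_add_distrib, ← Finset.card_univ, Finset.card_eq_sum_ones, Finset.mul_sum]
      refine Finset.sum_congr rfl fun R _ => ?_
      split_ifs <;> rfl
    have h10 : ∑ R : P, (if R ∈ K then 2 else 0) = 2 * K.card := by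
      rw [Finset.sum_ite_mem, Finset.univ_inter, Finset.sum_const, smul_eq_mul, mul_comm]
    rw [h10, hP, hK] at h9
    omega
  nlinarith

end PlaneAx


open scoped LinearAlgebra.Projectivization

/-- The projective plane over `F`. -/
abbrev PP (F : Type) [Field F] : Type := Projectivization F (Fin 3 → F)

instance PP.fintype (F : Type) [Field F] [Fintype F] : Fintype (PP F) := Fintype.ofFinite _

/-- incidence of points and lines. -/
def Inc {F : Type} [Field F] (p l : PP F) : Prop := p.orthogonal l

section plane
variable {F : Type} [Field F]

theorem inc_iff (p l : PP F) : Inc p l ↔ p.rep ⬝ᵥ l.rep = 0 := by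
  unfold Inc
  conv_lhs => rw [← p.mk_rep, ← l.mk_rep]
  exact Projectivization.orthogonal_mk _ _

theorem inc_mk_right (p : PP F) {v : Fin 3 → F} (hv : v ≠ 0) :
    Inc p (Projectivization.mk F v hv) ↔ p.rep ⬝ᵥ v = 0 := by
  unfold Inc
  conv_lhs => rw [← p.mk_rep]
  exact Projectivization.orthogonal_mk _ _

theorem inc_mk_left (l : PP F) {v : Fin 3 → F} (hv : v ≠ 0) :
    Inc (Projectivization.mk F v hv) l ↔ v ⬝ᵥ l.rep = 0 := by
  unfold Inc
  conv_lhs => rw [← l.mk_rep]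
  exact Projectivization.orthogonal_mk _ _

theorem inc_comm (p l : PP F) : Inc p l ↔ Inc l p := Projectivization.orthogonal_comm

theorem inc_unique {a b c d : PP F} (h1 : Inc a c) (h2 : Inc b c) (h3 : Inc a d) (h4 : Inc b d) :
    a = b ∨ c = d := Configuration.ofField.eq_or_eq_of_orthogonal h1 h2 h3 h4

theorem exists_join (a b : PP F) (h : a ≠ b) : ∃ l, Inc a l ∧ Inc b l := by
  classical
  exact ⟨Projectivization.cross a b, Projectivization.orthogonal_cross_left h,
    Projectivization.orthogonal_cross_right h⟩

variable [Fintype F]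

theorem card_PP : Nat.card (PP F) = Fintype.card F ^ 2 + Fintype.card F + 1 := by
  rw [Projectivization.card_of_finrank F (Fin 3 → F) (n := 3) (by simp)]
  simp [Finset.sum_range_succ]; ring

theorem card_PP' : Fintype.card (PP F) = Fintype.card F ^ 2 + Fintype.card F + 1 := by
  rw [← card_PP, Nat.card_eq_fintype_card]

theorem planeAx : PlaneAx (Fintype.card F) (PP F) (PP F) Inc := by
  classical
  have hord : Configuration.ProjectivePlane.order (PP F) (PP F) = Fintype.card F := by
    have h1 := Configuration.ProjectivePlane.card_points (PP F) (PP F)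
    rw [card_PP'] at h1
    nlinarith
  have hl : ∀ p : PP F, (Finset.univ.filter (fun l => Inc p l)).card = Fintype.card F + 1 := by
    intro p
    have := Configuration.ProjectivePlane.lineCount_eq (PP F) p
    rw [hord] at this
    rw [← this, Configuration.lineCount, Nat.card_eq_fintype_card, Fintype.card_subtype]
    congr
  have hj : ∀ p p' : PP F, p ≠ p' →
      (Finset.univ.filter (fun l => Inc p l ∧ Inc p' l)).card = 1 := by
    intro p p' hne
    obtain ⟨l, h1, h2⟩ := exists_join p p' hne
    rw [Finset.card_eq_one]
    refine ⟨l, ?_⟩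
    ext m
    simp only [Finset.mem_filter, Finset.mem_univ, true_and, Finset.mem_singleton]
    constructor
    · rintro ⟨h3, h4⟩
      exact (inc_unique h3 h4 h1 h2).resolve_left hne
    · rintro rfl; exact ⟨h1, h2⟩
  refine ⟨hl, ?_, hj, ?_⟩
  · intro l
    rw [← hl l]
    congr 1; ext p; simp [inc_comm p l]
  · intro l l' hne
    rw [← hj l l' hne]
    congr 1; ext p; simp [inc_comm p l, inc_comm p l']

end plane

section poly
variable {F : Type} [Field F]

theorem deg_sum {n : ℕ} {f : MvPolynomial (Fin 3) F} (hf : f.IsHomogeneous n) (d : Fin 3 →₀ ℕ)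
    (hd : d ∈ f.support) : ∑ i, d i = n := by
  rw [hf.degree_eq_sum_deg_support hd]
  symm
  apply Finset.sum_subset (Finset.subset_univ _)
  intro i _ hi
  simpa using hi

theorem eval_smul_hom {n : ℕ} {f : MvPolynomial (Fin 3) F} (hf : f.IsHomogeneous n) (c : F)
    (x : Fin 3 → F) : eval (c • x) f = c ^ n * eval x f := by
  rw [eval_eq', eval_eq', Finset.mul_sum]
  refine Finset.sum_congr rfl fun d hd => ?_
  have h1 : ∑ i, d i = n := deg_sum hf d hd
  simp only [Pi.smul_apply, smul_eq_mul, mul_pow, Finset.prod_mul_distrib, Finset.prod_pow_eq_pow_sum, h1]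
  ring

theorem eval_mk_rep {n : ℕ} {f : MvPolynomial (Fin 3) F} (hf : f.IsHomogeneous n) {x : Fin 3 → F}
    (hx : x ≠ 0) : eval (Projectivization.mk F x hx).rep f = 0 ↔ eval x f = 0 := by
  obtain ⟨a, ha⟩ := Projectivization.exists_smul_eq_mk_rep F x hx
  rw [← ha]
  have : (a • x) = (a : F) • x := rfl
  rw [this, eval_smul_hom hf]
  simp

/-- restriction to a parametrized line -/
def res (u w : Fin 3 → F) (f : MvPolynomial (Fin 3) F) : Polynomial F :=
  aeval (fun i => Polynomial.C (u i) + Polynomial.C (w i) * Polynomial.X) f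

theorem res_C (u w : Fin 3 → F) (a : F) : res u w (C a) = Polynomial.C a := by
  unfold res; rw [aeval_C]; rfl

theorem res_X (u w : Fin 3 → F) (i : Fin 3) :
    res u w (X i) = Polynomial.C (u i) + Polynomial.C (w i) * Polynomial.X := by
  unfold res; rw [aeval_X]

theorem res_add (u w : Fin 3 → F) (f g : MvPolynomial (Fin 3) F) :
    res u w (f + g) = res u w f + res u w g := by
  unfold res; rw [map_add]

theorem res_mul (u w : Fin 3 → F) (f g : MvPolynomial (Fin 3) F) :
    res u w (f * g) = res u w f * res u w g := by
  unfold res; rw [map_mul]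

theorem res_zero (u w : Fin 3 → F) : res u w (0 : MvPolynomial (Fin 3) F) = 0 := by
  unfold res; rw [map_zero]

theorem res_one (u w : Fin 3 → F) : res u w (1 : MvPolynomial (Fin 3) F) = 1 := by
  unfold res; rw [map_one]

theorem res_eval (u w : Fin 3 → F) (f : MvPolynomial (Fin 3) F) (t : F) :
    (res u w f).eval t = eval (u + t • w) f := by
  induction f using MvPolynomial.induction_on with
  | C a => rw [res_C]; simp
  | add p q hp hq => rw [res_add, Polynomial.eval_add, hp, hq, map_add]
  | mul_X p i hp =>
    rw [res_mul, Polynomial.eval_mul, hp, map_mul, res_X, eval_X, Polynomial.eval_add, Polynomial.eval_mul,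
      Polynomial.eval_C, Polynomial.eval_C, Polynomial.eval_X, Pi.add_apply, Pi.smul_apply,
      smul_eq_mul, mul_comm t]

theorem res_derivative (u w : Fin 3 → F) (f : MvPolynomial (Fin 3) F) :
    Polynomial.derivative (res u w f) = ∑ i, res u w (pderiv i f) * Polynomial.C (w i) := by
  induction f using MvPolynomial.induction_on with
  | C a => simp only [res_C, pderiv_C, res_zero, Polynomial.derivative_C, zero_mul,
      Finset.sum_const_zero]
  | add p q hp hq =>
    simp only [map_add, res_add, Polynomial.derivative_add, hp, hq, add_mul,
      Finset.sum_add_distrib]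
  | mul_X p i hp =>
    have h1 : Polynomial.derivative (res u w (X i)) = Polynomial.C (w i) := by
      rw [res_X]; simp
    have h2 : ∀ j, res u w (pderiv j (p * X i)) = res u w p * (if j = i then 1 else 0) +
        res u w (X i) * res u w (pderiv j p) := by
      intro j
      rw [Derivation.leibniz, smul_eq_mul, smul_eq_mul, res_add, res_mul, res_mul, pderiv_X]
      by_cases h : j = i
      · subst h; simp [res_one]
      · simp [h, res_zero]
    rw [res_mul, Polynomial.derivative_mul, hp, h1]
    simp only [h2, add_mul, Finset.sum_add_distrib, Finset.sum_mul, mul_ite, mul_one, mul_zero,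
      ite_mul, zero_mul, Finset.sum_ite_eq', Finset.sum_ite_eq, Finset.mem_univ, if_true]
    rw [add_comm, add_right_inj]
    refine Finset.sum_congr rfl fun j _ => ?_
    rw [mul_comm (res u w (X i)), mul_assoc, mul_assoc, mul_comm (res u w (X i))]

theorem res_coeff {n : ℕ} {f : MvPolynomial (Fin 3) F} (hf : f.IsHomogeneous n) (u w : Fin 3 → F) :
    (res u w f).natDegree ≤ n ∧ (res u w f).coeff n = eval w f := by
  have hlin : ∀ i, (Polynomial.C (u i) + Polynomial.C (w i) * Polynomial.X).natDegree ≤ 1 := by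
    intro i; compute_degree
  have hexp : res u w f = ∑ d ∈ f.support, Polynomial.C (coeff d f) *
      ∏ i, (Polynomial.C (u i) + Polynomial.C (w i) * Polynomial.X) ^ d i := by
    unfold res
    rw [aeval_def, eval₂_eq']
    rfl
  have hprod : ∀ (m : Fin 3 → ℕ) (s : Finset (Fin 3)),
      (∏ i ∈ s, (Polynomial.C (u i) + Polynomial.C (w i) * Polynomial.X) ^ m i).natDegree
        ≤ ∑ i ∈ s, m i ∧
      (∏ i ∈ s, (Polynomial.C (u i) + Polynomial.C (w i) * Polynomial.X) ^ m i).coeff (∑ i ∈ s, m i)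
        = ∏ i ∈ s, w i ^ m i := by
    intro m s
    induction s using Finset.induction_on with
    | empty => simp
    | insert a s ha ih =>
      rw [Finset.prod_insert ha, Finset.sum_insert ha, Finset.prod_insert ha]
      have h1 : ((Polynomial.C (u a) + Polynomial.C (w a) * Polynomial.X) ^ m a).natDegree ≤ m a := by
        have := Polynomial.natDegree_pow_le_of_le (m a) (hlin a); simpa using this
      have h2 : ((Polynomial.C (u a) + Polynomial.C (w a) * Polynomial.X) ^ m a).coeff (m a)
          = w a ^ m a := by
        have := Polynomial.coeff_pow_of_natDegree_le (m := m a) (hlin a)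
        simpa using this
      refine ⟨Polynomial.natDegree_mul_le.trans (by omega), ?_⟩
      rw [Polynomial.coeff_mul_add_eq_of_natDegree_le h1 ih.1, h2, ih.2]
  have hsum : ∀ d ∈ f.support, ∑ i, d i = n := deg_sum hf
  constructor
  · rw [hexp]
    apply Polynomial.natDegree_sum_le_of_forall_le
    intro d hd
    refine (Polynomial.natDegree_C_mul_le _ _).trans ?_
    have := (hprod d Finset.univ).1
    rw [hsum d hd] at this; exact this
  · rw [hexp, Polynomial.finsetSum_coeff, eval_eq']
    refine Finset.sum_congr rfl fun d hd => ?_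
    have := (hprod d Finset.univ).2
    rw [hsum d hd] at this
    rw [Polynomial.coeff_C_mul, this]

end poly


section C
variable {F : Type} [Field F]

theorem span_of_perp {l p u w : Fin 3 → F} (hl : l ≠ 0) (hp : p ⬝ᵥ l = 0) (hu : u ⬝ᵥ l = 0)
    (hw : w ⬝ᵥ l = 0) (hi : LinearIndependent F ![u, w]) : ∃ a b : F, p = a • u + b • w := by
  have hdet : (Matrix.of ![p, u, w]).det = 0 := by
    rw [← Matrix.exists_mulVec_eq_zero_iff]
    refine ⟨l, hl, ?_⟩
    ext i
    fin_cases i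
    · exact hp
    · exact hu
    · exact hw
  rw [← Matrix.exists_vecMul_eq_zero_iff] at hdet
  obtain ⟨c, hc, he⟩ := hdet
  have he' : c 0 • p + c 1 • u + c 2 • w = 0 := by
    ext i
    have := congrFun he i
    simp only [Matrix.vecMul, dotProduct, Fin.sum_univ_three] at this
    simpa using this
  have h0 : c 0 ≠ 0 := by
    intro h0
    rw [h0, zero_smul, zero_add] at he'
    have := LinearIndependent.pair_iff.mp hi _ _ he'
    apply hc
    ext i
    fin_cases i
    · exact h0
    · exact this.1
    · exact this.2
  refine ⟨-(c 0)⁻¹ * c 1, -(c 0)⁻¹ * c 2, ?_⟩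
  have : p = (c 0)⁻¹ • (c 0 • p) := by rw [smul_smul, inv_mul_cancel₀ h0, one_smul]
  have h2 : c 0 • p = -(c 1 • u + c 2 • w) := by
    rw [eq_neg_iff_add_eq_zero, ← add_assoc]; exact he'
  rw [this, h2]
  simp only [smul_neg, smul_add, smul_smul, neg_mul, neg_smul]
  abel

variable [Fintype F]

open Classical in
/-- rational zero set -/
def ZZ (f : MvPolynomial (Fin 3) F) : Finset (PP F) :=
  Finset.univ.filter (fun x => eval x.rep f = 0)

theorem mem_ZZ {f : MvPolynomial (Fin 3) F} {x : PP F} : x ∈ ZZ f ↔ eval x.rep f = 0 := by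
  simp [ZZ]

/-- gradient -/
def grad (f : MvPolynomial (Fin 3) F) (x : Fin 3 → F) : Fin 3 → F := fun i => eval x (pderiv i f)

/-- `T` is a choice of tangent lines -/
def IsTan (f : MvPolynomial (Fin 3) F) (T : PP F → PP F) : Prop :=
  ∀ p ∈ ZZ f, Inc p (T p) ∧ ∃ c : F, grad f p.rep = c • (T p).rep

theorem euler {n : ℕ} {f : MvPolynomial (Fin 3) F} (hf : f.IsHomogeneous n) (x : Fin 3 → F) :
    x ⬝ᵥ grad f x = n * eval x f := by
  have := congrArg (eval x) hf.sum_X_mul_pderiv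
  simp only [map_sum, map_mul, eval_X, nsmul_eq_mul, map_natCast] at this
  exact this

theorem exists_line (p : PP F) : ∃ l, Inc p l := by
  classical
  have h1 := (planeAx (F := F)).lines_through p
  obtain ⟨l, hl⟩ := Finset.card_pos.mp (by omega : 0 < (Finset.univ.filter (fun l => Inc p l)).card)
  exact ⟨l, by simpa using hl⟩

theorem exists_tan {n : ℕ} {f : MvPolynomial (Fin 3) F} (hf : f.IsHomogeneous n) :
    ∃ T, IsTan f T := by
  have : ∀ p : PP F, ∃ t : PP F, p ∈ ZZ f → Inc p t ∧ ∃ c : F, grad f p.rep = c • t.rep := by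
    intro p
    by_cases hg : grad f p.rep = 0
    · obtain ⟨l, hl⟩ := exists_line p
      exact ⟨l, fun _ => ⟨hl, 0, by simp [hg]⟩⟩
    · refine ⟨Projectivization.mk F _ hg, fun hp => ⟨?_, ?_⟩⟩
      · rw [inc_mk_right, euler hf, mem_ZZ.mp hp, mul_zero]
      · obtain ⟨a, ha⟩ := Projectivization.exists_smul_eq_mk_rep F _ hg
        refine ⟨(a⁻¹ : Fˣ), ?_⟩
        rw [← ha]
        ext i
        simp [Units.smul_def]
  choose T hT using this
  exact ⟨T, hT⟩

theorem exists_other (l W : PP F) : ∃ U, Inc U l ∧ U ≠ W := by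
  classical
  have h1 := (planeAx (F := F)).points_on l
  have h2 : 0 < Fintype.card F := Fintype.card_pos
  obtain ⟨a, ha, b, hb, hab⟩ := Finset.one_lt_card.mp
    (by omega : 1 < (Finset.univ.filter (fun p => Inc p l)).card)
  simp only [Finset.mem_filter, Finset.mem_univ, true_and] at ha hb
  by_cases h : a = W
  · exact ⟨b, hb, fun e => hab (h.trans e.symm)⟩
  · exact ⟨a, ha, h⟩

theorem indep_of_ne {U W : PP F} (h : U ≠ W) : LinearIndependent F ![U.rep, W.rep] :=
  Projectivization.linearIndependent_pair_iff_ne.mpr h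

open Classical in
theorem line_bound {n : ℕ} {f : MvPolynomial (Fin 3) F} (hf : f.IsHomogeneous n) (hn : n ≠ 0)
    {T : PP F → PP F} (hT : IsTan f T) (l W : PP F) (hW : Inc W l) (hfW : eval W.rep f ≠ 0) :
    PlaneAx.kk Inc (ZZ f) l + PlaneAx.tt T (ZZ f) l ≤ n := by
  obtain ⟨U, hU, hUW⟩ := exists_other l W
  have hind := indep_of_ne hUW
  set u := U.rep
  set w := W.rep
  set g := res u w f with hg
  have hgc := res_coeff hf u w
  have hg0 : g ≠ 0 := by
    intro h0
    apply hfW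
    rw [← hgc.2, ← hg, h0, Polynomial.coeff_zero]
  set s := (ZZ f).filter (fun p => Inc p l) with hs
  have hex : ∀ p : PP F, ∃ t : F, p ∈ s → ∃ a : F, a ≠ 0 ∧ p.rep = a • (u + t • w) := by
    intro p
    by_cases hp : p ∈ s
    · simp only [hs, Finset.mem_filter, mem_ZZ] at hp
      obtain ⟨a, b, hab⟩ := span_of_perp l.rep_nonzero ((inc_iff _ _).mp hp.2)
        ((inc_iff _ _).mp hU) ((inc_iff _ _).mp hW) hind
      have ha : a ≠ 0 := by
        rintro rfl
        rw [zero_smul, zero_add] at hab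
        have h1 := hp.1
        rw [hab, eval_smul_hom hf] at h1
        rcases mul_eq_zero.mp h1 with h2 | h2
        · have hb : b = 0 := eq_zero_of_pow_eq_zero h2
          rw [hb, zero_smul] at hab
          exact p.rep_nonzero hab
        · exact hfW h2
      refine ⟨a⁻¹ * b, fun _ => ⟨a, ha, ?_⟩⟩
      rw [hab, smul_add, smul_smul, ← mul_assoc, mul_inv_cancel₀ ha, one_mul]
    · exact ⟨0, fun h => absurd h hp⟩
  choose t ht using hex
  have hinj : Set.InjOn t s := by
    intro p hp p' hp' he
    obtain ⟨a, ha, h1⟩ := ht p hp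
    obtain ⟨a', ha', h2⟩ := ht p' hp'
    rw [← p.mk_rep, ← p'.mk_rep, Projectivization.mk_eq_mk_iff']
    refine ⟨a * a'⁻¹, ?_⟩
    rw [h1, h2, he, smul_smul, mul_assoc, inv_mul_cancel₀ ha', mul_one]
  have hroot : ∀ p ∈ s, g.IsRoot (t p) := by
    intro p hp
    obtain ⟨a, ha, h1⟩ := ht p hp
    rw [Polynomial.IsRoot.def, hg, res_eval]
    simp only [hs, Finset.mem_filter, mem_ZZ] at hp
    have h2 := hp.1
    rw [h1, eval_smul_hom hf] at h2
    exact (mul_eq_zero.mp h2).resolve_left (pow_ne_zero _ ha)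
  have htan : ∀ p ∈ s, T p = l → (Polynomial.derivative g).IsRoot (t p) := by
    intro p hp hTp
    obtain ⟨a, ha, h1⟩ := ht p hp
    simp only [hs, Finset.mem_filter] at hp
    obtain ⟨_, c, hc⟩ := hT p hp.1
    rw [hTp] at hc
    have h3 : ∑ i, grad f p.rep i * w i = 0 := by
      rw [hc]
      have := (inc_iff _ _).mp hW
      simp only [dotProduct, Fin.sum_univ_three] at this
      simp only [Fin.sum_univ_three, Pi.smul_apply, smul_eq_mul]
      linear_combination c * this
    rw [Polynomial.IsRoot.def, hg, res_derivative, Polynomial.eval_finsetSum]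
    simp only [Polynomial.eval_mul, Polynomial.eval_C, res_eval]
    have h4 : ∀ i, grad f p.rep i = a ^ (n - 1) * eval (u + t p • w) (pderiv i f) := by
      intro i
      unfold grad
      rw [h1, eval_smul_hom hf.pderiv]
    simp only [h4, mul_assoc, ← Finset.mul_sum] at h3
    exact (mul_eq_zero.mp h3).resolve_left (pow_ne_zero _ ha)
  have hmult : ∀ p ∈ s, (1 + if T p = l then 1 else 0) ≤ g.roots.count (t p) := by
    intro p hp
    rw [Polynomial.count_roots]
    split_ifs with h
    · exact (Polynomial.one_lt_rootMultiplicity_iff_isRoot hg0).mpr ⟨hroot p hp, htan p hp h⟩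
    · exact (Polynomial.rootMultiplicity_pos hg0).mpr (hroot p hp)
  have hcount : ∑ p ∈ s, g.roots.count (t p) ≤ n := by
    rw [← Finset.sum_image (f := fun x => g.roots.count x) hinj]
    calc ∑ x ∈ s.image t, g.roots.count x ≤ ∑ x ∈ g.roots.toFinset, g.roots.count x := by
          apply Finset.sum_le_sum_of_subset
          intro x hx
          obtain ⟨p, hp, rfl⟩ := Finset.mem_image.mp hx
          rw [Multiset.mem_toFinset, Polynomial.mem_roots hg0]
          exact hroot p hp
      _ = g.roots.card := Multiset.toFinset_sum_count_eq _
      _ ≤ g.natDegree := Polynomial.card_roots' g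
      _ ≤ n := hgc.1
  have hsum := (Finset.sum_le_sum hmult).trans hcount
  rw [Finset.sum_add_distrib, ← Finset.card_eq_sum_ones, ← Finset.card_filter] at hsum
  refine le_trans (Nat.add_le_add (le_refl _) (Finset.card_le_card ?_)) hsum
  intro p hp
  simp only [hs, Finset.mem_filter] at hp ⊢
  exact ⟨⟨hp.1, hp.2 ▸ (hT p hp.1).1⟩, hp.2⟩

/-- linear form of a line -/
def lin (l : Fin 3 → F) : MvPolynomial (Fin 3) F := ∑ i, C (l i) * X i

theorem lin_hom (l : Fin 3 → F) : (lin l).IsHomogeneous 1 :=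
  IsHomogeneous.sum _ _ _ fun i _ => isHomogeneous_C_mul_X _ _

theorem lin_eval (l x : Fin 3 → F) : eval x (lin l) = x ⬝ᵥ l := by
  simp [lin, dotProduct, mul_comm]

theorem lin_dvd {n : ℕ} {f : MvPolynomial (Fin 3) F} (hf : f.IsHomogeneous (n + 1))
    (hn : n + 1 ≤ Fintype.card F) (l : PP F) (hl : ∀ x, Inc x l → x ∈ ZZ f) :
    ∃ g : MvPolynomial (Fin 3) F, g.IsHomogeneous n ∧ f = lin l.rep * g := by
  set v := l.rep with hv
  have hv0 : v ≠ 0 := l.rep_nonzero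
  obtain ⟨i, hi⟩ := Function.ne_iff.mp hv0
  simp only [Pi.zero_apply] at hi
  -- substitution
  let σ : Fin 3 → MvPolynomial (Fin 3) F := fun j =>
    X j - (if j = i then C (v i)⁻¹ * lin v else 0)
  have hσ : ∀ j, (σ j).IsHomogeneous 1 := by
    intro j
    apply (isHomogeneous_X _ _).sub
    split_ifs
    · exact (lin_hom v).C_mul _
    · exact isHomogeneous_zero _ _ _
  have hft : (aeval σ f).IsHomogeneous (n + 1) := by
    have := hf.aeval σ hσ
    simpa using this
  have hzero : aeval σ f = 0 := by
    apply hft.eq_zero_of_forall_eval_eq_zero_of_le_card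
    · intro r
      have h1 : eval r (aeval σ f) = eval (fun j => eval r (σ j)) f := by
        rw [← MvPolynomial.coe_aeval_eq_eval, ← MvPolynomial.coe_aeval_eq_eval]
        simp only [RingHom.coe_coe]
        rw [← AlgHom.comp_apply, MvPolynomial.comp_aeval]
      rw [h1]
      set y : Fin 3 → F := fun j => eval r (σ j) with hy
      have hy0 : y ⬝ᵥ v = 0 := by
        have : y = r - Pi.single i ((v i)⁻¹ * (r ⬝ᵥ v)) := by
          ext j
          simp only [hy, σ, map_sub, eval_X, Pi.sub_apply]
          by_cases h : j = i
          · subst h; simp [lin_eval]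
          · simp [h]
        rw [this, sub_dotProduct, single_dotProduct]
        field_simp
        ring
      by_cases hyz : y = 0
      · rw [hyz]
        have := eval_smul_hom hf 0 (0 : Fin 3 → F)
        simpa using this
      · rw [← eval_mk_rep hf hyz]
        apply mem_ZZ.mp
        apply hl
        rw [inc_mk_left]; exact hy0
    · rw [Cardinal.mk_fintype]
      exact_mod_cast hn
  have hdvd : lin v ∣ f := by
    rw [← Ideal.mem_span_singleton, ← Ideal.Quotient.eq_zero_iff_mem]
    have h1 : (Ideal.Quotient.mkₐ F (Ideal.span {lin v})) (aeval σ f) =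
        (Ideal.Quotient.mkₐ F (Ideal.span {lin v})) f := by
      rw [← AlgHom.comp_apply, MvPolynomial.comp_aeval]
      have h2 : (fun j => (Ideal.Quotient.mkₐ F (Ideal.span {lin v})) (σ j)) =
          fun j => (Ideal.Quotient.mkₐ F (Ideal.span {lin v})) (X j) := by
        ext j
        simp only [Ideal.Quotient.mkₐ_eq_mk]
        rw [Ideal.Quotient.mk_eq_mk_iff_sub_mem, Ideal.mem_span_singleton]
        simp only [σ]
        split_ifs
        · exact ⟨-C (v i)⁻¹, by ring⟩
        · simp
      rw [h2, ← MvPolynomial.comp_aeval, AlgHom.comp_apply]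
      simp
    rw [hzero, map_zero] at h1
    exact h1.symm
  obtain ⟨g, hg⟩ := hdvd
  refine ⟨homogeneousComponent n g, homogeneousComponent_isHomogeneous n g, ?_⟩
  have h1 : homogeneousComponent (n + 1) f = f := by
    rw [homogeneousComponent_of_mem hf, if_pos rfl]
  have h2 : f = ∑ i ∈ Finset.range (g.totalDegree + 1), lin v * homogeneousComponent i g := by
    rw [← Finset.mul_sum, sum_homogeneousComponent, hg]
  rw [← h1]
  conv_lhs => rw [h2]
  rw [map_sum]
  have h3 : ∀ i, homogeneousComponent (n + 1) (lin v * homogeneousComponent i g) =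
      if i = n then lin v * homogeneousComponent i g else 0 := by
    intro i
    have h4 : lin v * homogeneousComponent i g ∈ homogeneousSubmodule (Fin 3) F (1 + i) :=
      (lin_hom v).mul (homogeneousComponent_isHomogeneous i g)
    rw [homogeneousComponent_of_mem h4]
    by_cases h : i = n
    · subst h; simp [add_comm]
    · rw [if_neg (by omega), if_neg h]
  simp only [h3]
  rw [Finset.sum_ite_eq']
  split_ifs with h
  · rfl
  · rw [homogeneousComponent_eq_zero _ _ (by simpa using h), mul_zero]

end C


section D
variable {F : Type} [Field F] [Fintype F]

/-- the gradient of a quartic in characteristic two has the form `x × S(x²)` -/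
def QForm (f : MvPolynomial (Fin 3) F) (A : Fin 3 → Fin 3 → F) : Prop :=
  ∀ x : Fin 3 → F,
    grad f x 0 = x 2 * (∑ j, A 1 j * x j ^ 2) + x 1 * (∑ j, A 2 j * x j ^ 2) ∧
    grad f x 1 = x 0 * (∑ j, A 2 j * x j ^ 2) + x 2 * (∑ j, A 0 j * x j ^ 2) ∧
    grad f x 2 = x 1 * (∑ j, A 0 j * x j ^ 2) + x 0 * (∑ j, A 1 j * x j ^ 2)

theorem quartic_mono (h2 : (2 : F) = 0) (d : Fin 3 →₀ ℕ) (hd : ∑ i, d i = 4) (c : F) :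
    ∃ A, QForm (monomial d c) A := by
  have h3 : (3 : F) = 1 := by linear_combination h2
  have h4 : (4 : F) = 0 := by linear_combination 2 * h2
  rw [Fin.sum_univ_three] at hd
  refine ⟨![![if d 0 = 2 ∧ d 1 = 1 then c else 0, if d 1 = 3 ∧ d 2 = 1 then c else 0,
      if d 1 = 1 ∧ d 2 = 3 then c else 0],
    ![if d 0 = 3 ∧ d 2 = 1 then c else 0, if d 0 = 1 ∧ d 1 = 2 then c else 0,
      if d 0 = 1 ∧ d 2 = 3 then c else 0],
    ![if d 0 = 3 ∧ d 1 = 1 then c else 0, if d 0 = 1 ∧ d 1 = 3 then c else 0,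
      if d 0 = 1 ∧ d 1 = 1 then c else 0]], ?_⟩
  intro x
  simp only [grad, pderiv_monomial, eval_monomial, Finsupp.prod_fintype _ _ (fun i => pow_zero (x i)),
    Fin.prod_univ_three, Fin.sum_univ_three, Finsupp.tsub_apply]
  generalize d 0 = a at *
  generalize d 1 = b at *
  generalize d 2 = e at *
  have ha : a ≤ 4 := by omega
  have hb : b ≤ 4 := by omega
  obtain rfl : e = 4 - a - b := by omega
  interval_cases a <;> interval_cases b <;> first | (exfalso; omega) | skip
  all_goals
    simp [h2, h3, h4]
  all_goals
    first
    | ring1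
    | (refine ⟨?_, ?_⟩ <;> ring1)

theorem quartic_grad (h2 : (2 : F) = 0) {f : MvPolynomial (Fin 3) F} (hf : f.IsHomogeneous 4) :
    ∃ A, QForm f A := by
  rw [f.as_sum]
  refine Finset.sum_induction _ (fun g => ∃ A, QForm g A) ?_ ?_ ?_
  · rintro a b ⟨A, hA⟩ ⟨B, hB⟩
    refine ⟨A + B, fun x => ?_⟩
    obtain ⟨a1, a2, a3⟩ := hA x
    obtain ⟨b1, b2, b3⟩ := hB x
    simp only [grad, map_add, Pi.add_apply, Fin.sum_univ_three] at *
    rw [a1, a2, a3, b1, b2, b3]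
    refine ⟨by ring, by ring, by ring⟩
  · exact ⟨0, fun x => by simp [grad]⟩
  · intro d hd
    exact quartic_mono h2 d (deg_sum hf d hd) _

end D


section E
variable {F : Type} [Field F] [Fintype F]

/-- lines with the eigenvector property -/
def Eig (A : Fin 3 → Fin 3 → F) (l : Fin 3 → F) (μ : F) : Prop :=
  ∀ j, ∑ i, l i * A i j = μ * l j ^ 2

theorem perp_S (h2 : (2 : F) = 0) {x L S : Fin 3 → F} {c : F} (hx : x ≠ 0) (hxL : x ⬝ᵥ L = 0)
    (h0 : c * L 0 = x 2 * S 1 + x 1 * S 2) (h1 : c * L 1 = x 0 * S 2 + x 2 * S 0)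
    (h3 : c * L 2 = x 1 * S 0 + x 0 * S 1) : L 0 * S 0 + L 1 * S 1 + L 2 * S 2 = 0 := by
  simp only [dotProduct, Fin.sum_univ_three] at hxL
  by_cases hc : c = 0
  · subst hc
    by_cases hx0 : x 0 = 0
    · by_cases hx1 : x 1 = 0
      · have hx2 : x 2 ≠ 0 := by
          intro hx2
          apply hx
          ext i
          fin_cases i
          · exact hx0
          · exact hx1
          · exact hx2
        apply (mul_eq_zero.mp (?_ : x 2 * _ = 0)).resolve_left hx2
        linear_combination S 2 * hxL - L 0 * h1 - L 1 * h0 - (L 0 * x 0 * S 2 + L 1 * x 1 * S 2) * h2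
      · apply (mul_eq_zero.mp (?_ : x 1 * _ = 0)).resolve_left hx1
        linear_combination S 1 * hxL - L 0 * h3 - L 2 * h0 - (L 0 * x 0 * S 1 + L 2 * x 2 * S 1) * h2
    · apply (mul_eq_zero.mp (?_ : x 0 * _ = 0)).resolve_left hx0
      linear_combination S 0 * hxL - L 1 * h3 - L 2 * h1 - (L 1 * x 1 * S 0 + L 2 * x 2 * S 0) * h2
  · apply (mul_eq_zero.mp (?_ : c * _ = 0)).resolve_left hc
    linear_combination S 0 * h0 + S 1 * h1 + S 2 * h3 +
      (x 2 * S 1 * S 0 + x 1 * S 2 * S 0 + x 0 * S 1 * S 2) * h2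

theorem exists_eig (h2 : (2 : F) = 0) {f : MvPolynomial (Fin 3) F} {A : Fin 3 → Fin 3 → F}
    (hA : QForm f A) {T : PP F → PP F} (hT : IsTan f T) {l p p' : PP F} (hp : p ∈ ZZ f)
    (hp' : p' ∈ ZZ f) (hne : p ≠ p') (hl : T p = l) (hl' : T p' = l) : ∃ μ, Eig A l.rep μ := by
  have : CharP F 2 := CharTwo.of_one_ne_zero_of_two_eq_zero one_ne_zero h2
  have key : ∀ p ∈ ZZ f, T p = l → ∑ j, (∑ i, l.rep i * A i j) * p.rep j ^ 2 = 0 := by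
    intro p hp hl
    obtain ⟨hi, c, hc⟩ := hT p hp
    rw [hl] at hi hc
    obtain ⟨a0, a1, a2⟩ := hA p.rep
    have := perp_S h2 p.rep_nonzero ((inc_iff _ _).mp hi) (c := c)
      (S := fun i => ∑ j, A i j * p.rep j ^ 2)
      (by rw [← a0, hc]; rfl) (by rw [← a1, hc]; rfl) (by rw [← a2, hc]; rfl)
    simp only [Fin.sum_univ_three] at this ⊢
    linear_combination this
  have hsq : ∀ j, ∃ e : F, e ^ 2 = ∑ i, l.rep i * A i j := by
    intro j
    have hb := (bijective_frobenius F 2).2 (∑ i, l.rep i * A i j)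
    simpa [frobenius_def] using hb
  choose e he using hsq
  have key2 : ∀ p ∈ ZZ f, T p = l → p.rep ⬝ᵥ e = 0 := by
    intro p hp hl
    have := key p hp hl
    simp only [← he, ← mul_pow] at this
    rw [← CharTwo.sum_sq] at this
    have := pow_eq_zero_iff (two_ne_zero) |>.mp this
    rw [← this]
    simp [dotProduct, mul_comm]
  by_cases h0 : e = 0
  · refine ⟨0, fun j => ?_⟩
    rw [← he, h0]; simp
  · have hm : Projectivization.mk F e h0 = l := by
      have h3 := (hT p hp).1
      have h4 := (hT p' hp').1
      rw [hl] at h3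
      rw [hl'] at h4
      exact ((inc_unique h3 h4 ((inc_mk_right _ h0).mpr (key2 p hp hl))
        ((inc_mk_right _ h0).mpr (key2 p' hp' hl'))).resolve_left hne).symm
    obtain ⟨a, ha⟩ := Projectivization.exists_smul_eq_mk_rep F e h0
    rw [hm] at ha
    refine ⟨((a⁻¹ : Fˣ) : F) ^ 2, fun j => ?_⟩
    rw [← he, ← ha, ← mul_pow]
    simp [Units.smul_def]

open Classical in
theorem eig_contra (h2 : (2 : F) = 0) {A : Fin 3 → Fin 3 → F} {B : Finset (PP F)}
    (hB : ∀ l ∈ B, ∃ μ, Eig A l.rep μ)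
    {m0 m1 m2 : PP F} (h0 : m0 ∈ B) (h1 : m1 ∈ B) (h2B : m2 ∈ B)
    (hind : ∀ a b c : F, a • m0.rep + b • m1.rep + c • m2.rep = 0 → a = 0 ∧ b = 0 ∧ c = 0)
    {μ : F} (hμ : Eig A m0.rep μ) (hμ0 : μ ≠ 0) {R : PP F} (hR1 : Inc R m1) (hR2 : Inc R m2) :
    (B.filter (fun l => ¬ Inc R l)).card ≤ 4 := by
  have : CharP F 2 := CharTwo.of_one_ne_zero_of_two_eq_zero one_ne_zero h2
  obtain ⟨μ1, hμ1⟩ := hB m1 h1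
  obtain ⟨μ2, hμ2⟩ := hB m2 h2B
  set M : Matrix (Fin 3) (Fin 3) F := Matrix.of ![m0.rep, m1.rep, m2.rep] with hM
  have hdet : M.det ≠ 0 := by
    intro hd
    obtain ⟨c, hc, hcM⟩ := Matrix.exists_vecMul_eq_zero_iff.mpr hd
    have h3 := hind (c 0) (c 1) (c 2) (by
      ext i
      have := congrFun hcM i
      simp only [Matrix.vecMul, dotProduct, Fin.sum_univ_three, hM] at this
      simpa using this)
    apply hc
    ext i
    fin_cases i
    · exact h3.1
    · exact h3.2.1
    · exact h3.2.2
  -- squares are independent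
  have hind2 : ∀ a b c : F, (∀ j, a * m0.rep j ^ 2 + b * m1.rep j ^ 2 + c * m2.rep j ^ 2 = 0) →
      a = 0 ∧ b = 0 ∧ c = 0 := by
    intro a b c h
    have hs : ∀ a : F, ∃ e : F, e ^ 2 = a := by
      intro a
      have hb := (bijective_frobenius F 2).2 a
      simpa [frobenius_def] using hb
    obtain ⟨a', rfl⟩ := hs a
    obtain ⟨b', rfl⟩ := hs b
    obtain ⟨c', rfl⟩ := hs c
    have h3 := hind a' b' c' (by
      ext j
      have := h j
      simp only [← mul_pow, ← CharTwo.add_sq] at this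
      have := pow_eq_zero_iff (two_ne_zero) |>.mp this
      simpa using this)
    rw [h3.1, h3.2.1, h3.2.2]
    simp
  have hspan : ∀ x : Fin 3 → F, ∃ c : Fin 3 → F, x = c 0 • m0.rep + c 1 • m1.rep + c 2 • m2.rep := by
    intro x
    refine ⟨Matrix.vecMul x M⁻¹, ?_⟩
    have h3 : Matrix.vecMul (Matrix.vecMul x M⁻¹) M = x := by
      rw [Matrix.vecMul_vecMul, Matrix.nonsing_inv_mul _ (isUnit_iff_ne_zero.mpr hdet),
        Matrix.vecMul_one]
    conv_lhs => rw [← h3]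
    ext i
    simp only [Matrix.vecMul, dotProduct, Fin.sum_univ_three, hM]
    simp
  choose c hc using fun l : PP F => hspan l.rep
  have hR0 : ∀ l, ¬ Inc R l → c l 0 ≠ 0 := by
    intro l hl h
    apply hl
    rw [inc_iff] at hR1 hR2 ⊢
    rw [hc l, h]
    simp [dotProduct_add, dotProduct_smul, hR1, hR2]
  have hform : ∀ l ∈ B, ¬ Inc R l → (c l 1 = 0 ∨ c l 1 = c l 0 * (μ1 / μ)) ∧
      (c l 2 = 0 ∨ c l 2 = c l 0 * (μ2 / μ)) := by
    intro l hl hR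
    obtain ⟨ν, hν⟩ := hB l hl
    have hc0 := hR0 l hR
    have h3 := hind2 (c l 0 * μ - ν * c l 0 ^ 2) (c l 1 * μ1 - ν * c l 1 ^ 2)
      (c l 2 * μ2 - ν * c l 2 ^ 2) (by
        intro j
        have e := hν j
        have e0 := hμ j
        have e1 := hμ1 j
        have e2 := hμ2 j
        rw [hc l] at e
        simp only [Fin.sum_univ_three, Pi.add_apply, Pi.smul_apply, smul_eq_mul,
          CharTwo.add_sq, mul_pow] at e e0 e1 e2
        linear_combination e - c l 0 * e0 - c l 1 * e1 - c l 2 * e2)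
    obtain ⟨k0, k1, k2⟩ := h3
    have hν0 : ν * c l 0 = μ := by
      have : c l 0 * (μ - ν * c l 0) = 0 := by linear_combination k0
      have := (mul_eq_zero.mp this).resolve_left hc0
      linear_combination -this
    have hνn : ν ≠ 0 := by
      rintro rfl
      apply hμ0
      rw [← hν0, zero_mul]
    have aux : ∀ x m : F, x * m - ν * x ^ 2 = 0 → x = 0 ∨ x = c l 0 * (m / μ) := by
      intro x m hx
      by_cases hx0 : x = 0
      · exact Or.inl hx0
      · right
        have : x * (m - ν * x) = 0 := by linear_combination hx
        have := (mul_eq_zero.mp this).resolve_left hx0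
        rw [← hν0]
        field_simp
        linear_combination -this
    exact ⟨aux _ _ k1, aux _ _ k2⟩
  have hcard : (Finset.univ : Finset (Bool × Bool)).card = 4 := by decide
  rw [← hcard]
  apply Finset.card_le_card_of_injOn (fun l => (decide (c l 1 = 0), decide (c l 2 = 0)))
  · intro _ _; simp
  · intro l hl l' hl' he
    simp only [Finset.coe_filter, Set.mem_setOf_eq] at hl hl'
    simp only [Prod.mk.injEq, decide_eq_decide] at he
    have n0 := hR0 l hl.2
    have n0' := hR0 l' hl'.2
    obtain ⟨f1, f2⟩ := hform l hl.1 hl.2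
    obtain ⟨f1', f2'⟩ := hform l' hl'.1 hl'.2
    have aux : ∀ x x' m : F, (x = 0 ∨ x = c l 0 * m) → (x' = 0 ∨ x' = c l' 0 * m) → (x = 0 ↔ x' = 0) →
        c l 0 * x' = c l' 0 * x := by
      intro x x' m e1 e2 e3
      by_cases hx : x = 0
      · rw [hx, e3.mp hx]; simp
      · have hx' : x' ≠ 0 := fun h => hx (e3.mpr h)
        rw [e1.resolve_left hx, e2.resolve_left hx']
        ring
    have g1 := aux _ _ _ f1 f1' he.1
    have g2 := aux _ _ _ f2 f2' he.2
    rw [← l.mk_rep, ← l'.mk_rep, Projectivization.mk_eq_mk_iff']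
    refine ⟨(c l' 0)⁻¹ * c l 0, ?_⟩
    rw [hc l, hc l']
    have g1' : c l 1 = (c l' 0)⁻¹ * (c l 0 * c l' 1) := by rw [g1]; field_simp
    have g2' : c l 2 = (c l' 0)⁻¹ * (c l 0 * c l' 2) := by rw [g2]; field_simp
    rw [g1', g2']
    ext i
    simp only [Pi.add_apply, Pi.smul_apply, smul_eq_mul]
    field_simp

end E


section G
variable {F : Type} [Field F] [Fintype F]

/-- no rational line is contained in the zero set -/
def NoLine (f : MvPolynomial (Fin 3) F) : Prop := ∀ l : PP F, ∃ W, Inc W l ∧ eval W.rep f ≠ 0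

theorem tanSet {n : ℕ} {f : MvPolynomial (Fin 3) F} (hf : f.IsHomogeneous n) (hn : n ≠ 0)
    (hN : NoLine f) {T : PP F → PP F} (hT : IsTan f T) : PlaneAx.TanSet Inc (ZZ f) T n where
  mem p hp := (hT p hp).1
  bound l := by
    obtain ⟨W, hW, hf0⟩ := hN l
    exact line_bound hf hn hT l W hW hf0

theorem pair_indep {u w : Fin 3 → F} (hi : LinearIndependent F ![u, w]) (x y : F)
    (h : x • u + y • w = 0) : x = 0 ∧ y = 0 :=
  LinearIndependent.pair_iff.mp hi _ _ h

theorem det_indep {a b c : PP F} (hab : a ≠ b) {R : PP F} (ha : Inc R a) (hb : Inc R b)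
    (hc : ¬ Inc R c) (x y z : F) (h : x • a.rep + y • b.rep + z • c.rep = 0) :
    x = 0 ∧ y = 0 ∧ z = 0 := by
  rw [inc_iff] at ha hb hc
  have h1 : z * (R.rep ⬝ᵥ c.rep) = 0 := by
    have h2 : R.rep ⬝ᵥ (x • a.rep + y • b.rep + z • c.rep) = 0 := by rw [h, dotProduct_zero]
    rw [dotProduct_add, dotProduct_add, dotProduct_smul, dotProduct_smul, dotProduct_smul,
      ha, hb, smul_zero, smul_zero, zero_add, zero_add] at h2
    exact h2
  have hz : z = 0 := (mul_eq_zero.mp h1).resolve_right hc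
  rw [hz, zero_smul, add_zero] at h
  have := pair_indep (indep_of_ne hab) x y h
  exact ⟨this.1, this.2, hz⟩

theorem exists_meet (a b : PP F) (h : a ≠ b) : ∃ R, Inc R a ∧ Inc R b := by
  obtain ⟨R, h1, h2⟩ := exists_join a b h
  exact ⟨R, (inc_comm _ _).mp h1, (inc_comm _ _).mp h2⟩

open Classical in
theorem quartic_bound {f : MvPolynomial (Fin 3) F} (hf : f.IsHomogeneous 4) (hN : NoLine f)
    (hq : 5 ≤ Fintype.card F) : (ZZ f).card ≤ 3 * Fintype.card F + 1 := by
  by_contra hlt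
  push Not at hlt
  obtain ⟨T, hT⟩ := exists_tan hf
  obtain ⟨hcard, B, hBc, hB, hpen⟩ := planeAx.four_struct (tanSet hf (by norm_num) hN hT) hlt
  have h2 : (2 : F) = 0 := by
    have h3 : ringChar F = 2 := by
      rw [FiniteField.even_card_iff_char_two]
      omega
    have := ringChar.Nat.cast_ringChar (R := F)
    rw [h3] at this
    exact_mod_cast this
  obtain ⟨A, hA⟩ := quartic_grad h2 hf
  have hE : ∀ l ∈ B, ∃ μ, Eig A l.rep μ := by
    intro l hl
    obtain ⟨p, hp, p', hp', hne, h3, h4⟩ := hB l hl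
    exact exists_eig h2 hA hT hp hp' hne h3 h4
  have contra : ∀ m0 ∈ B, ∀ m1 ∈ B, ∀ m2 ∈ B,
      (∀ a b c : F, a • m0.rep + b • m1.rep + c • m2.rep = 0 → a = 0 ∧ b = 0 ∧ c = 0) →
      ∀ μ, Eig A m0.rep μ → μ = 0 := by
    intro m0 h0 m1 h1 m2 hm2 hind μ hμ
    by_contra hμ0
    have hne : m1 ≠ m2 := by
      rintro rfl
      have := hind 0 1 (-1) (by simp)
      exact one_ne_zero this.2.1
    obtain ⟨R, hR1, hR2⟩ := exists_meet m1 m2 hne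
    have h3 := eig_contra h2 hE h0 h1 hm2 hind hμ hμ0 hR1 hR2
    have h4 := hpen m1 h1 m2 hm2 hne R hR1 hR2
    have h5 := Finset.card_filter_add_card_filter_not (s := B) (fun l => Inc R l)
    have h6 : ∀ (x y : ℕ), (2 * x ≤ Fintype.card F + 2) → y ≤ 4 → x + y = B.card → False := by
      intro x y; omega
    refine h6 _ _ ?_ h3 h5
    convert h4
  obtain ⟨l1, hl1, l2, hl2, hne⟩ := Finset.one_lt_card.mp (by omega : 1 < B.card)
  obtain ⟨R, hR1, hR2⟩ := exists_meet l1 l2 hne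
  have hl0 : ∃ l0 ∈ B, ¬ Inc R l0 := by
    by_contra hall
    push Not at hall
    have h4 := hpen l1 hl1 l2 hl2 hne R hR1 hR2
    have h5 : B.filter (fun m => Inc R m) = B := Finset.filter_true_of_mem hall
    have h6 : 2 * B.card ≤ Fintype.card F + 2 := by
      conv_lhs => rw [← h5]
      convert h4
    omega
  obtain ⟨l0, hl0, hR0⟩ := hl0
  have hi := det_indep hne hR1 hR2 hR0
  obtain ⟨μ0, e0⟩ := hE l0 hl0
  obtain ⟨μ1, e1⟩ := hE l1 hl1
  obtain ⟨μ2, e2⟩ := hE l2 hl2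
  have z1 := contra l1 hl1 l2 hl2 l0 hl0 hi μ1 e1
  have z2 := contra l2 hl2 l1 hl1 l0 hl0 (fun a b c h => by
    have := hi b a c (by rw [← h]; abel)
    exact ⟨this.2.1, this.1, this.2.2⟩) μ2 e2
  have z0 := contra l0 hl0 l1 hl1 l2 hl2 (fun a b c h => by
    have := hi b c a (by rw [← h]; abel)
    exact ⟨this.2.2, this.1, this.2.1⟩) μ0 e0
  subst z0 z1 z2
  -- all eigenvalues vanish, so `A = 0`
  have hA0 : ∀ j i, A i j = 0 := by
    intro j
    by_contra hne0
    have hcol : (fun i => A i j) ≠ 0 := by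
      intro h
      exact hne0 (fun i => congrFun h i)
    set X := Projectivization.mk F _ hcol
    have hinc : ∀ l : PP F, Eig A l.rep 0 → Inc X l := by
      intro l hl
      rw [inc_mk_left, dotProduct_comm]
      have := hl j
      rw [zero_mul] at this
      exact this
    rcases inc_unique (hinc l1 e1) hR1 (hinc l2 e2) hR2 with h | h
    · exact hR0 (h ▸ hinc l0 e0)
    · exact hne h
  have hg : ∀ x, grad f x = 0 := by
    intro x
    obtain ⟨a0, a1, a2⟩ := hA x
    simp only [hA0, zero_mul, Finset.sum_const_zero, mul_zero, add_zero] at a0 a1 a2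
    ext i
    fin_cases i
    · exact a0
    · exact a1
    · exact a2
  have hkk : ∀ l, PlaneAx.kk Inc (ZZ f) l ≤ 2 := by
    intro l
    have hT' : IsTan f (fun p => if Inc p l then l else T p) := by
      intro p hp
      refine ⟨?_, 0, by rw [hg, zero_smul]⟩
      show Inc p (if Inc p l then l else T p)
      split_ifs with h
      · exact h
      · exact (hT p hp).1
    have h3 := (tanSet hf (by norm_num) hN hT').bound l
    have h4 : PlaneAx.kk Inc (ZZ f) l ≤
        PlaneAx.tt (fun p => if Inc p l then l else T p) (ZZ f) l :=
      PlaneAx.kk_le_tt (fun p _ hp => by simp [hp])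
    omega
  obtain ⟨p, hp⟩ := Finset.card_pos.mp (by omega : 0 < (ZZ f).card)
  have h5 := (planeAx (F := F)).sum_def (ZZ f) 2 hkk p
  rw [if_pos hp] at h5
  omega

end G


section H
variable {F : Type} [Field F] [Fintype F] {E : Type} [Field E] [Algebra F E]

theorem indep_v [Fintype E] (v : Fin 3 → E)
    (hv : LinearIndependent E
      ![v, fun i => v i ^ Fintype.card F, fun i => v i ^ Fintype.card F ^ 2]) :
    LinearIndependent F v := by
  rw [Fintype.linearIndependent_iff]
  intro a ha
  set q := Fintype.card F with hq
  let φ := FiniteField.frobeniusAlgHom F E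
  have hφ : ∀ x, φ x = x ^ q := fun x => rfl
  have h1 : ∑ i, a i • v i ^ q = 0 := by
    have := congrArg φ ha
    rw [map_sum, map_zero] at this
    simp only [map_smul] at this
    simpa only [hφ] using this
  have h2 : ∑ i, a i • v i ^ q ^ 2 = 0 := by
    have := congrArg φ h1
    rw [map_sum, map_zero] at this
    simp only [map_smul] at this
    simpa only [hφ, ← pow_mul, ← pow_two] using this
  have hu : IsUnit (Matrix.of ![v, fun i => v i ^ q, fun i => v i ^ q ^ 2]) :=
    Matrix.linearIndependent_rows_iff_isUnit.mp hv
  have hz : Matrix.mulVec (Matrix.of ![v, fun i => v i ^ q, fun i => v i ^ q ^ 2])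
      (fun i => algebraMap F E (a i)) = 0 := by
    simp only [Algebra.smul_def] at ha h1 h2
    ext i
    simp only [Matrix.mulVec, dotProduct]
    fin_cases i
    · exact (Finset.sum_congr rfl fun x _ => mul_comm _ _).trans ha
    · exact (Finset.sum_congr rfl fun x _ => mul_comm _ _).trans h1
    · exact (Finset.sum_congr rfl fun x _ => mul_comm _ _).trans h2
  have := Matrix.mulVec_injective_of_isUnit hu (hz.trans (Matrix.mulVec_zero _).symm)
  intro i
  have h3 := congrFun this i
  simpa using h3

variable {v : Fin 3 → E}

theorem aeval_lin (v : Fin 3 → E) (l : Fin 3 → F) : aeval v (lin l) = ∑ i, l i • v i := by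
  simp [lin, Algebra.smul_def]

theorem aeval_lin_ne (hv : LinearIndependent F v) {l : Fin 3 → F} (hl : l ≠ 0) :
    aeval v (lin l) ≠ 0 := by
  rw [aeval_lin]
  intro h
  apply hl
  ext i
  exact Fintype.linearIndependent_iff.mp hv l h i

theorem lin_ne {l : Fin 3 → F} (hl : l ≠ 0) : lin l ≠ 0 := by
  intro h
  apply hl
  ext i
  have := lin_eval l (Pi.single i 1)
  rw [h, map_zero, single_dotProduct, one_mul] at this
  exact this.symm

theorem van0 {g : MvPolynomial (Fin 3) F} (hg : g.IsHomogeneous 0) (h : aeval v g = 0) : g = 0 := by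
  have h1 : g.totalDegree = 0 := Nat.le_zero.mp hg.totalDegree_le
  rw [totalDegree_eq_zero_iff_eq_C] at h1
  rw [h1, aeval_C] at h
  rw [h1, (map_eq_zero _).mp h, C_0]

/-- factor off a line -/
theorem split_line {n : ℕ} (hv : LinearIndependent F v) {f : MvPolynomial (Fin 3) F}
    (hf : f.IsHomogeneous (n + 1)) (hn : n + 1 ≤ Fintype.card F) (h0 : f ≠ 0) (hfv : aeval v f = 0)
    (hN : ¬ NoLine f) : ∃ (l : PP F) (g : MvPolynomial (Fin 3) F), g.IsHomogeneous n ∧ g ≠ 0 ∧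
      aeval v g = 0 ∧ f = lin l.rep * g := by
  unfold NoLine at hN
  push Not at hN
  obtain ⟨l, hl⟩ := hN
  obtain ⟨g, hg, rfl⟩ := lin_dvd hf hn l (fun x hx => mem_ZZ.mpr (hl x hx))
  refine ⟨l, g, hg, right_ne_zero_of_mul h0, ?_, rfl⟩
  rw [map_mul] at hfv
  exact (mul_eq_zero.mp hfv).resolve_left (aeval_lin_ne hv l.rep_nonzero)

open Classical in
theorem mem_ZZ_lin {l x : PP F} {g : MvPolynomial (Fin 3) F} :
    x ∈ ZZ (lin l.rep * g) ↔ Inc x l ∨ x ∈ ZZ g := by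
  rw [mem_ZZ, mem_ZZ, map_mul, lin_eval, mul_eq_zero, inc_iff]

open Classical in
theorem card_lin (l : PP F) (g : MvPolynomial (Fin 3) F) :
    (ZZ (lin l.rep * g)).card + PlaneAx.kk Inc (ZZ g) l = (ZZ g).card + (Fintype.card F + 1) := by
  have h1 : ZZ (lin l.rep * g) = Finset.univ.filter (fun x => Inc x l) ∪ ZZ g := by
    ext x
    rw [mem_ZZ_lin]
    simp
  have h2 := (planeAx (F := F)).points_on l
  have h3 := Finset.card_union_add_card_inter (Finset.univ.filter (fun x => Inc x l)) (ZZ g)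
  have h4 : Finset.univ.filter (fun x => Inc x l) ∩ ZZ g = (ZZ g).filter (fun x => Inc x l) := by
    ext x; simp [and_comm]
  rw [← h1, h4] at h3
  unfold PlaneAx.kk
  omega

theorem card_lin_of_line {l : PP F} {g : MvPolynomial (Fin 3) F} (hg : ¬ NoLine g) :
    (ZZ (lin l.rep * g)).card ≤ (ZZ g).card + Fintype.card F := by
  classical
  have h1 := card_lin l g
  unfold NoLine at hg
  push Not at hg
  obtain ⟨m, hm⟩ := hg
  have h2 : ∃ R, Inc R l ∧ Inc R m := by
    by_cases h : l = m
    · subst h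
      obtain ⟨R, hR⟩ := exists_line l
      exact ⟨R, (inc_comm _ _).mp hR, (inc_comm _ _).mp hR⟩
    · exact exists_meet l m h
  obtain ⟨R, hR, hRm⟩ := h2
  have h3 : 0 < PlaneAx.kk Inc (ZZ g) l :=
    Finset.card_pos.mpr ⟨R, by simp [mem_ZZ, hm R hRm, hR]⟩
  omega

theorem van1 (hv : LinearIndependent F v) {g : MvPolynomial (Fin 3) F} (hg : g.IsHomogeneous 1)
    (h : aeval v g = 0) : g = 0 := by
  have h1 : g = lin (fun i => coeff (Finsupp.single i 1) g) := by
    ext d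
    by_cases hd : ∑ i, d i = 1
    · have : ∃ i, d = Finsupp.single i 1 := by
        rw [Fin.sum_univ_three] at hd
        have h3 : (d 0 = 1 ∧ d 1 = 0 ∧ d 2 = 0) ∨ (d 0 = 0 ∧ d 1 = 1 ∧ d 2 = 0) ∨
          (d 0 = 0 ∧ d 1 = 0 ∧ d 2 = 1) := by omega
        rcases h3 with h3 | h3 | h3
        · exact ⟨0, by ext i; fin_cases i <;> simp [h3]⟩
        · exact ⟨1, by ext i; fin_cases i <;> simp [h3]⟩
        · exact ⟨2, by ext i; fin_cases i <;> simp [h3]⟩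
      obtain ⟨i, rfl⟩ := this
      simp only [lin, coeff_sum, coeff_C_mul, coeff_X]
      simp [Finsupp.single_left_inj]
    · have aux : ∀ p : MvPolynomial (Fin 3) F, p.IsHomogeneous 1 → coeff d p = 0 := by
        intro p hp
        by_contra hne
        exact hd (deg_sum hp d (mem_support_iff.mpr hne))
      rw [aux g hg, aux _ (lin_hom _)]
  by_contra hne
  have hl : (fun i => coeff (Finsupp.single i 1) g) ≠ 0 := by
    intro hl
    rw [hl] at h1
    apply hne
    rw [h1]; simp [lin]
  rw [h1] at h
  exact aeval_lin_ne hv hl h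

theorem noLine_two (hv : LinearIndependent F v) (hq : 5 ≤ Fintype.card F)
    {g : MvPolynomial (Fin 3) F} (hg : g.IsHomogeneous 2) (h0 : g ≠ 0) (h : aeval v g = 0) :
    NoLine g := by
  by_contra hN
  obtain ⟨l, k, hk, hk0, hkv, rfl⟩ := split_line hv (n := 1) hg (by omega) h0 h hN
  exact hk0 (van1 hv hk hkv)

theorem bound2 {g : MvPolynomial (Fin 3) F} (hg : g.IsHomogeneous 2) (hN : NoLine g) :
    (ZZ g).card ≤ Fintype.card F + 1 := by
  obtain ⟨T, hT⟩ := exists_tan hg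
  exact planeAx.two_bound (tanSet hg (by norm_num) hN hT)

theorem bound3 (hv : LinearIndependent F v) (hq : 5 ≤ Fintype.card F)
    {g : MvPolynomial (Fin 3) F} (hg : g.IsHomogeneous 3) (h0 : g ≠ 0) (h : aeval v g = 0) :
    (ZZ g).card ≤ 2 * Fintype.card F + 2 ∧ (NoLine g → (ZZ g).card ≤ 2 * Fintype.card F + 1) := by
  have key : NoLine g → (ZZ g).card ≤ 2 * Fintype.card F + 1 := by
    intro hN
    obtain ⟨T, hT⟩ := exists_tan hg
    exact planeAx.three_bound (tanSet hg (by norm_num) hN hT)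
  refine ⟨?_, key⟩
  by_cases hN : NoLine g
  · have := key hN; omega
  · obtain ⟨l, k, hk, hk0, hkv, rfl⟩ := split_line hv (n := 2) hg (by omega) h0 h hN
    have h1 := bound2 hk (noLine_two hv hq hk hk0 hkv)
    have h2 := card_lin l k
    omega

theorem bound4 (hv : LinearIndependent F v) (hq : 5 ≤ Fintype.card F)
    {g : MvPolynomial (Fin 3) F} (hg : g.IsHomogeneous 4) (h0 : g ≠ 0) (h : aeval v g = 0) :
    (ZZ g).card ≤ 3 * Fintype.card F + 2 := by
  by_cases hN : NoLine g
  · have := quartic_bound hg hN hq; omega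
  · obtain ⟨l, k, hk, hk0, hkv, rfl⟩ := split_line hv (n := 3) hg (by omega) h0 h hN
    have h1 := bound3 hv hq hk hk0 hkv
    by_cases hNk : NoLine k
    · have h3 := h1.2 hNk
      have h2 := card_lin l k
      omega
    · have := card_lin_of_line (l := l) hNk
      omega

theorem bound5 (hv : LinearIndependent F v) (hq : 5 ≤ Fintype.card F)
    {g : MvPolynomial (Fin 3) F} (hg : g.IsHomogeneous 5) (h0 : g ≠ 0) (h : aeval v g = 0) :
    (ZZ g).card ≤ 4 * Fintype.card F + 2 := by
  by_cases hN : NoLine g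
  · obtain ⟨T, hT⟩ := exists_tan hg
    exact planeAx.five_bound (tanSet hg (by norm_num) hN hT)
  · obtain ⟨l, k, hk, hk0, hkv, rfl⟩ := split_line hv (n := 4) hg (by omega) h0 h hN
    have h1 := bound4 hv hq hk hk0 hkv
    by_cases hNk : NoLine k
    · have h3 := quartic_bound hk hNk hq
      have h2 := card_lin l k
      omega
    · have := card_lin_of_line (l := l) hNk
      omega

open Classical in
theorem ncard_ne (f : MvPolynomial (Fin 3) F) :
    {x : PP F | eval x.rep f ≠ 0}.ncard + (ZZ f).card =
      Fintype.card F ^ 2 + Fintype.card F + 1 := by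
  have h1 : {x : PP F | eval x.rep f ≠ 0} = ((ZZ f)ᶜ : Finset (PP F)) := by
    ext x; simp [mem_ZZ]
  rw [h1, Set.ncard_coe_finset, Finset.card_compl, card_PP']
  have := Finset.card_le_univ (ZZ f)
  rw [card_PP'] at this
  omega

end H


section J
variable {F : Type} [Field F] {E : Type} [Field E] [Algebra F E]

theorem finrank_hom (n : ℕ) :
    Module.finrank F (homogeneousSubmodule (Fin 3) F n) = (3 + n - 1).choose n := by
  classical
  rw [homogeneousSubmodule_eq_finsupp_supported]
  refine (Module.finrank_eq_nat_card_basis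
    (basisRestrictSupport F {d : Fin 3 →₀ ℕ | d.degree = n})).trans ?_
  have h1 : Nat.card {P : Fin 3 →₀ ℕ // (P.sum fun _ => id) = n} = (3 + n - 1).choose n := by
    rw [← Nat.card_congr (Sym.equivNatSum (Fin 3) n), Nat.card_eq_fintype_card,
      Sym.card_sym_eq_choose]
    simp
  exact h1

instance hom_finite (n : ℕ) : Module.Finite F (homogeneousSubmodule (Fin 3) F n) := by
  apply Module.finite_of_finrank_pos
  rw [finrank_hom]
  exact Nat.choose_pos (by omega)

theorem rank_nullity {W : Type} [AddCommGroup W] [Module F W] (n : ℕ)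
    (φ : MvPolynomial (Fin 3) F →ₗ[F] W) :
    Module.finrank F (LinearMap.range (φ ∘ₗ (homogeneousSubmodule (Fin 3) F n).subtype)) +
      Module.finrank F ↥(homogeneousSubmodule (Fin 3) F n ⊓ LinearMap.ker φ) =
      (3 + n - 1).choose n := by
  rw [← finrank_hom (F := F) n,
    ← LinearMap.finrank_range_add_finrank_ker (φ ∘ₗ (homogeneousSubmodule (Fin 3) F n).subtype),
    LinearMap.ker_comp, ← Submodule.map_comap_subtype, Submodule.finrank_map_subtype_eq]

theorem finrank_E [Fintype F] [Fintype E] (h : Fintype.card E = Fintype.card F ^ 3) :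
    Module.finrank F E = 3 := by
  have h1 := Module.card_eq_pow_finrank (K := F) (V := E)
  rw [h] at h1
  exact (Nat.pow_right_injective (Fintype.one_lt_card) h1).symm

theorem dim18 [Fintype F] [Fintype E] (h : Fintype.card E = Fintype.card F ^ 3) {v : Fin 3 → E}
    (hv : LinearIndependent F v) :
    Module.finrank F ↥(homogeneousSubmodule (Fin 3) F 5 ⊓
      LinearMap.ker (MvPolynomial.aeval (R := F) v).toLinearMap) = 18 := by
  have h1 := rank_nullity 5 (MvPolynomial.aeval (R := F) v).toLinearMap
  have h2 : LinearMap.range ((MvPolynomial.aeval (R := F) v).toLinearMap ∘ₗ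
      (homogeneousSubmodule (Fin 3) F 5).subtype) = ⊤ := by
    rw [LinearMap.range_eq_top]
    intro e
    have hv0 : v 0 ≠ 0 := hv.ne_zero 0
    have hsp := hv.span_eq_top_of_card_eq_finrank (by rw [finrank_E h]; simp)
    have he : e / v 0 ^ 4 ∈ Submodule.span F (Set.range v) := by rw [hsp]; trivial
    rw [Submodule.mem_span_range_iff_exists_fun] at he
    obtain ⟨c, hc⟩ := he
    refine ⟨⟨X 0 ^ 4 * lin c, ?_⟩, ?_⟩
    · exact (isHomogeneous_X_pow (R := F) (0 : Fin 3) 4).mul (lin_hom c)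
    · simp only [LinearMap.comp_apply, Submodule.subtype_apply, AlgHom.toLinearMap_apply, map_mul,
        map_pow, aeval_X, aeval_lin, hc]
      field_simp
  rw [h2, finrank_top, finrank_E h] at h1
  have : (3 + 5 - 1).choose 5 = 21 := by decide
  omega

theorem exists_conic [Fintype F] [Fintype E] (h : Fintype.card E = Fintype.card F ^ 3)
    (v : Fin 3 → E) (A B : PP F) : ∃ g : MvPolynomial (Fin 3) F, g.IsHomogeneous 2 ∧ g ≠ 0 ∧
      aeval v g = 0 ∧ A ∈ ZZ g ∧ B ∈ ZZ g := by
  let φ : MvPolynomial (Fin 3) F →ₗ[F] E × F × F :=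
    (MvPolynomial.aeval (R := F) v).toLinearMap.prod
      ((MvPolynomial.aeval (R := F) A.rep).toLinearMap.prod
        (MvPolynomial.aeval (R := F) B.rep).toLinearMap)
  have h1 := rank_nullity 2 φ
  have hfin : Module.Finite F E := Module.Finite.of_finite
  have h2 : Module.finrank F (LinearMap.range (φ ∘ₗ (homogeneousSubmodule (Fin 3) F 2).subtype)) ≤
      5 := by
    refine (Submodule.finrank_le _).trans ?_
    simp [Module.finrank_prod, finrank_E h]
  have : (3 + 2 - 1).choose 2 = 6 := by decide
  have h3 : homogeneousSubmodule (Fin 3) F 2 ⊓ LinearMap.ker φ ≠ ⊥ := by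
    intro h3
    rw [h3, finrank_bot] at h1
    omega
  obtain ⟨g, hg, hg0⟩ := Submodule.exists_mem_ne_zero_of_ne_bot h3
  obtain ⟨hg1, hg2⟩ := Submodule.mem_inf.mp hg
  rw [LinearMap.mem_ker] at hg2
  have e1 : aeval v g = 0 := congrArg Prod.fst hg2
  have e2 : aeval A.rep g = 0 := congrArg (fun t => t.2.1) hg2
  have e3 : aeval B.rep g = 0 := congrArg (fun t => t.2.2) hg2
  refine ⟨g, hg1, hg0, e1, ?_, ?_⟩
  · rw [mem_ZZ, ← e2, aeval_eq_eval]
  · rw [mem_ZZ, ← e3, aeval_eq_eval]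

variable [Fintype F]

theorem conic_card {g : MvPolynomial (Fin 3) F} (hg : g.IsHomogeneous 2) (hN : NoLine g)
    {A B : PP F} (hA : A ∈ ZZ g) (hB : B ∈ ZZ g) (hAB : A ≠ B) :
    Fintype.card F + 1 ≤ (ZZ g).card := by
  classical
  obtain ⟨T, hT⟩ := exists_tan hg
  have hgr : grad g A.rep ≠ 0 := by
    intro h0
    obtain ⟨l, hAl, hBl⟩ := exists_join A B hAB
    have hT' : IsTan g (fun p => if p = A then l else T p) := by
      intro p hp
      show Inc p (if p = A then l else T p) ∧ ∃ c : F, grad g p.rep = c • (if p = A then l else T p).rep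
      split_ifs with h
      · subst h
        exact ⟨hAl, 0, by rw [h0, zero_smul]⟩
      · exact hT p hp
    have h1 := (tanSet hg (by norm_num) hN hT').bound l
    have h2 : 1 ≤ PlaneAx.tt (fun p => if p = A then l else T p) (ZZ g) l :=
      Finset.card_pos.mpr ⟨A, by simp [hA]⟩
    have h3 : 1 < PlaneAx.kk Inc (ZZ g) l :=
      Finset.one_lt_card.mpr ⟨A, by simp [hA, hAl], B, by simp [hB, hBl], hAB⟩
    omega
  obtain ⟨hAT, c, hc⟩ := hT A hA
  have hc0 : c ≠ 0 := by
    rintro rfl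
    exact hgr (by rw [hc, zero_smul])
  have hline : ∀ l, Inc A l → l ≠ T A → 2 ≤ PlaneAx.kk Inc (ZZ g) l := by
    intro l hl hne
    have hother : ∃ x ∈ ZZ g, Inc x l ∧ x ≠ A := by
      obtain ⟨w, hw, hwA⟩ := exists_other l A
      by_cases hgw : eval w.rep g = 0
      · exact ⟨w, mem_ZZ.mpr hgw, hw, hwA⟩
      set D := ∑ i, grad g A.rep i * w.rep i with hD
      have hD0 : D ≠ 0 := by
        intro h0
        have h1 : Inc w (T A) := by
          rw [inc_iff]
          rw [hD, hc] at h0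
          simp only [Pi.smul_apply, smul_eq_mul, mul_assoc, ← Finset.mul_sum] at h0
          have := (mul_eq_zero.mp h0).resolve_left hc0
          rw [dotProduct_comm]
          exact this
        rcases inc_unique hl hw hAT h1 with h | h
        · exact hwA h.symm
        · exact hne h
      have hev : ∀ t, eval (A.rep + t • w.rep) g = D * t + eval w.rep g * t ^ 2 := by
        intro t
        have hc2 := res_coeff hg A.rep w.rep
        have e0 : (res A.rep w.rep g).coeff 0 = 0 := by
          rw [Polynomial.coeff_zero_eq_eval_zero, res_eval, zero_smul, add_zero]
          exact mem_ZZ.mp hA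
        have e1 : (res A.rep w.rep g).coeff 1 = D := by
          have h1 : (Polynomial.derivative (res A.rep w.rep g)).coeff 0 = D := by
            rw [Polynomial.coeff_zero_eq_eval_zero, res_derivative, Polynomial.eval_finsetSum]
            simp only [Polynomial.eval_mul, Polynomial.eval_C, res_eval, zero_smul, add_zero]
            rfl
          rw [Polynomial.coeff_derivative] at h1
          simpa using h1
        rw [← res_eval, Polynomial.eval_eq_sum_range' (n := 3) (by omega)]
        simp [Finset.sum_range_succ, e0, e1, hc2.2]
      set t := -D / eval w.rep g with ht
      have ht0 : t ≠ 0 := div_ne_zero (neg_ne_zero.mpr hD0) hgw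
      have hind := indep_of_ne (Ne.symm hwA)
      have hz : A.rep + t • w.rep ≠ 0 := by
        intro h0
        have := pair_indep hind 1 t (by rw [one_smul, h0])
        exact one_ne_zero this.1
      refine ⟨Projectivization.mk F _ hz, ?_, ?_, ?_⟩
      · rw [mem_ZZ, eval_mk_rep hg hz, hev, ht]
        field_simp
        ring
      · rw [inc_mk_left, add_dotProduct, smul_dotProduct, (inc_iff _ _).mp hl, (inc_iff _ _).mp hw]
        simp
      · intro he
        have he2 := he.trans A.mk_rep.symm
        rw [Projectivization.mk_eq_mk_iff'] at he2
        obtain ⟨a, ha⟩ := he2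
        have := pair_indep hind (1 - a) t (by
          rw [sub_smul, one_smul, ha]; abel)
        exact ht0 this.2
    obtain ⟨x, hx, hxl, hxA⟩ := hother
    exact Finset.one_lt_card.mpr ⟨x, by simp [hx, hxl], A, by simp [hA, hl], hxA⟩
  have hs := (planeAx (F := F)).sum_through (ZZ g) A
  rw [if_pos hA] at hs
  have hTA : 1 ≤ PlaneAx.kk Inc (ZZ g) (T A) := Finset.card_pos.mpr ⟨A, by simp [hA, hAT]⟩
  have hmem : T A ∈ Finset.univ.filter (fun l => Inc A l) := by simp [hAT]
  rw [← Finset.add_sum_erase _ _ hmem] at hs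
  have h5 : ∑ l ∈ (Finset.univ.filter (fun l => Inc A l)).erase (T A), 2 ≤
      ∑ l ∈ (Finset.univ.filter (fun l => Inc A l)).erase (T A), PlaneAx.kk Inc (ZZ g) l := by
    apply Finset.sum_le_sum
    intro l hl
    simp only [Finset.mem_erase, Finset.mem_filter, Finset.mem_univ, true_and] at hl
    exact hline l hl.2 hl.1
  rw [Finset.sum_const, Finset.card_erase_of_mem hmem, (planeAx (F := F)).lines_through A,
    smul_eq_mul] at h5
  omega

theorem attain [Fintype E] (h : Fintype.card E = Fintype.card F ^ 3) (hq : 5 ≤ Fintype.card F)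
    {v : Fin 3 → E} (hv : LinearIndependent F v) :
    ∃ f : MvPolynomial (Fin 3) F, f.IsHomogeneous 5 ∧ f ≠ 0 ∧ aeval v f = 0 ∧
      (ZZ f).card = 4 * Fintype.card F + 2 := by
  classical
  obtain ⟨A, B, hAB⟩ := Fintype.exists_pair_of_one_lt_card (α := PP F) (by
    rw [card_PP']
    omega)
  obtain ⟨g, hg, hg0, hgv, hA, hB⟩ := exists_conic h v A B
  have hN := noLine_two hv hq hg hg0 hgv
  have hc1 := conic_card hg hN hA hB hAB
  have hc2 := bound2 hg hN
  have hc : (ZZ g).card = Fintype.card F + 1 := by omega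
  have hkk : ∀ l, PlaneAx.kk Inc (ZZ g) l ≤ 2 := by
    intro l
    obtain ⟨T, hT⟩ := exists_tan hg
    have := (tanSet hg (by norm_num) hN hT).bound l
    omega
  obtain ⟨R, l1, l2, l3, h12, h13, h23, hR1, hR2, hR3, k1, k2, k3⟩ :=
    planeAx.exists_three hq card_PP' card_PP' hc hkk
  have hno : ∀ l, PlaneAx.kk Inc (ZZ g) l = 0 → ∀ x, Inc x l → x ∉ ZZ g := by
    intro l hl x hx hxg
    have : 0 < PlaneAx.kk Inc (ZZ g) l := Finset.card_pos.mpr ⟨x, by simp [hx, hxg]⟩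
    omega
  have hu : ∀ l m x : PP F, l ≠ m → Inc R l → Inc R m → Inc x l → Inc x m → x = R := by
    intro l m x hlm a b c d
    exact (inc_unique c a d b).resolve_right hlm
  have c3 := card_lin l3 g
  have c2 := card_lin l2 (lin l3.rep * g)
  have c1 := card_lin l1 (lin l2.rep * (lin l3.rep * g))
  have b2 : PlaneAx.kk Inc (ZZ (lin l3.rep * g)) l2 ≤ 1 := by
    refine (Finset.card_le_card (t := {R}) ?_).trans (by simp)
    intro x hx
    rw [Finset.mem_filter, mem_ZZ_lin] at hx
    rw [Finset.mem_singleton]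
    rcases hx.1 with h | h
    · exact hu l2 l3 x h23 hR2 hR3 hx.2 h
    · exact absurd h (hno l2 k2 x hx.2)
  have b1 : PlaneAx.kk Inc (ZZ (lin l2.rep * (lin l3.rep * g))) l1 ≤ 1 := by
    refine (Finset.card_le_card (t := {R}) ?_).trans (by simp)
    intro x hx
    rw [Finset.mem_filter, mem_ZZ_lin, mem_ZZ_lin] at hx
    rw [Finset.mem_singleton]
    rcases hx.1 with h | h | h
    · exact hu l1 l2 x h12 hR1 hR2 hx.2 h
    · exact hu l1 l3 x h13 hR1 hR3 hx.2 h
    · exact absurd h (hno l1 k1 x hx.2)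
  have hf : (lin l1.rep * (lin l2.rep * (lin l3.rep * g))).IsHomogeneous 5 :=
    (lin_hom _).mul ((lin_hom _).mul ((lin_hom _).mul hg))
  have hf0 : lin l1.rep * (lin l2.rep * (lin l3.rep * g)) ≠ 0 :=
    mul_ne_zero (lin_ne l1.rep_nonzero) (mul_ne_zero (lin_ne l2.rep_nonzero)
      (mul_ne_zero (lin_ne l3.rep_nonzero) hg0))
  have hfv : aeval v (lin l1.rep * (lin l2.rep * (lin l3.rep * g))) = 0 := by
    rw [map_mul, map_mul, map_mul, hgv]; simp
  have hub := bound5 hv hq hf hf0 hfv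
  exact ⟨_, hf, hf0, hfv, by omega⟩

end J

/-- Parameters of the code `C_L(Z, L_5)` for `q ≥ 5`: evaluating the quintics through a
degree-3 closed point (not on any rational line) at the `q² + q + 1` points of `P²(F_q)`
yields a code of length `q² + q + 1`, dimension `18` (the space of such quintics has
dimension `18` and the evaluation map is injective), and minimum distance exactly
`q² - 3q - 1`. -/
theorem stmt_18 (q : ℕ) (hq : IsPrimePow q) (hq5 : 5 ≤ q)
    (F E : Type) [Field F] [Fintype F] [Field E] [Fintype E] [Algebra F E]
    (hF : Fintype.card F = q) (hE : Fintype.card E = q ^ 3)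
    -- `v` represents a degree-3 closed point of `P²`: its three Frobenius conjugates are
    -- pairwise distinct and non-collinear (equivalently, linearly independent).
    (v : Fin 3 → E)
    (hv : LinearIndependent E ![v, fun i => v i ^ q, fun i => v i ^ q ^ 2]) :
    Nat.card (Projectivization F (Fin 3 → F)) = q ^ 2 + q + 1 ∧
    Module.finrank F
      ↥(homogeneousSubmodule (Fin 3) F 5 ⊓
          LinearMap.ker (MvPolynomial.aeval (R := F) v).toLinearMap) = 18 ∧
    (∀ f ∈ homogeneousSubmodule (Fin 3) F 5 ⊓
        LinearMap.ker (MvPolynomial.aeval (R := F) v).toLinearMap,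
      (∀ x : Projectivization F (Fin 3 → F), MvPolynomial.eval x.rep f = 0) → f = 0) ∧
    (∀ f ∈ homogeneousSubmodule (Fin 3) F 5 ⊓
        LinearMap.ker (MvPolynomial.aeval (R := F) v).toLinearMap, f ≠ 0 →
      q ^ 2 - 3 * q - 1 ≤
        {x : Projectivization F (Fin 3 → F) | MvPolynomial.eval x.rep f ≠ 0}.ncard) ∧
    (∃ f ∈ homogeneousSubmodule (Fin 3) F 5 ⊓
        LinearMap.ker (MvPolynomial.aeval (R := F) v).toLinearMap, f ≠ 0 ∧
      {x : Projectivization F (Fin 3 → F) | MvPolynomial.eval x.rep f ≠ 0}.ncard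
        = q ^ 2 - 3 * q - 1) := by
  subst hF
  have hi : LinearIndependent F v := indep_v v hv
  refine ⟨card_PP, dim18 hE hi, ?_, ?_, ?_⟩
  · rintro f ⟨hf, hfv⟩ hall
    by_contra h0
    have h1 := bound5 hi hq5 hf h0 hfv
    have h2 := ncard_ne f
    have h3 : {x : PP F | eval x.rep f ≠ 0} = ∅ := by
      ext x; simpa using hall x
    rw [h3, Set.ncard_empty] at h2
    nlinarith
  · rintro f ⟨hf, hfv⟩ h0
    have h1 := bound5 hi hq5 hf h0 hfv
    have h2 := ncard_ne f
    generalize Fintype.card F ^ 2 = s at *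
    change s - 3 * Fintype.card F - 1 ≤ {x : PP F | eval x.rep f ≠ 0}.ncard
    omega
  · obtain ⟨f, hf, h0, hfv, hc⟩ := attain hE hq5 hi
    refine ⟨f, ⟨hf, hfv⟩, h0, ?_⟩
    have h2 := ncard_ne f
    change {x : PP F | eval x.rep f ≠ 0}.ncard = _
    generalize Fintype.card F ^ 2 = s at *
    omega
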